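/- Subadditive ergodic limit (Lemma 3.2 of the paper): assume Assumption H. For every F ∈ ℝ^{n×d} there exists a set Ω_F ∈ ℱ with ℙ(Ω_F) = 1 such that for every ω ∈ Ω_F and every closed axis-parallel box Q = Π_{i=1}^d [a_i,b_i] with a_i < b_i for all i, the limit lim_{t→∞} m_F(ω; tQ)/|tQ| exists and equals W₀(F); moreover W₀(F) = inf_{k≥1} k^{−d} E[m_F(·;[0,k)^d)] = lim_{k→∞} k^{−d} E[m_F(·;[0,k)^d)]. -/

import Mathlib

open MeasureTheory Filter Metric Set
open scoped Classical
open scoped ENNReal Topology Pointwise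

noncomputable section

namespace StochHom

/-- `ℝ^d` with the Euclidean norm. -/
abbrev Rd (d : ℕ) : Type := EuclideanSpace ℝ (Fin d)

/-- `ℝ^n` with the Euclidean norm. -/
abbrev Rn (n : ℕ) : Type := EuclideanSpace ℝ (Fin n)

/-- The lattice `ℤ^d`. -/
abbrev Zd (d : ℕ) : Type := Fin d → ℤ

variable {d n : ℕ}

/-- The embedding of the lattice `ℤ^d` into `ℝ^d`. -/
def toRd (z : Zd d) : Rd d := (EuclideanSpace.equiv (Fin d) ℝ).symm fun i => (z i : ℝ)

/-- The standard basis vectors `eᵢ` of `ℤ^d`. -/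
def stdb (i : Fin d) : Zd d := fun j => if j = i then 1 else 0

/-- The interaction range `R = max {4√d, max_{b ∈ ℰ₀} |b|}`. -/
def irange (d : ℕ) (E0 : Finset (Zd d)) : ℝ :=
  max (4 * Real.sqrt d) (sSup ((fun b : Zd d => ‖toRd b‖) '' (E0 : Set (Zd d))))

variable {Ω : Type*} [MeasurableSpace Ω]

/-- The energy `E₁(ω; u, ℤ^d ∩ A)`. -/
def energy1 (τ : Zd d → Ω → Ω) (E0 : Finset (Zd d)) (V : Zd d → Ω → Rn n → ℝ)
    (ω : Ω) (u : Zd d → Rn n) (A : Set (Rd d)) : ℝ :=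
  ∑' z : Zd d, if toRd z ∈ A then
      ∑ b ∈ E0, V b (τ z ω) ((‖toRd b‖)⁻¹ • (u (z + b) - u z)) else 0

/-- The scaled energy `E_ε(ω; u, A)`, where a function `u : εℤ^d → ℝ^n` is identified with a
function on `ℤ^d` via `z ↦ u(εz)`, so that `∂_b^ε u (z) = (u (z+b) - u z)/(ε |b|)`. -/
def energyE (τ : Zd d → Ω → Ω) (E0 : Finset (Zd d)) (V : Zd d → Ω → Rn n → ℝ)
    (ε : ℝ) (ω : Ω) (u : Zd d → Rn n) (A : Set (Rd d)) : ℝ :=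
  ε ^ d * ∑' z : Zd d, if ε • toRd z ∈ A then
      ∑ b ∈ E0, V b (τ z ω) ((ε * ‖toRd b‖)⁻¹ • (u (z + b) - u z)) else 0

/-- The localized minimal energy `m_F(ω; A)`. -/
def mF (τ : Zd d → Ω → Ω) (E0 : Finset (Zd d)) (V : Zd d → Ω → Rn n → ℝ)
    (ω : Ω) (F : Rd d →L[ℝ] Rn n) (A : Set (Rd d)) : ℝ :=
  ⨅ φ : {φ : Zd d → Rn n // ∀ z : Zd d, infDist (toRd z) Aᶜ ≤ irange d E0 → φ z = 0},
    energy1 τ E0 V ω (fun z => F (toRd z) + φ.1 z) A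

/-- The half-open cube `[0,k)^d ⊂ ℝ^d`. -/
def cube (d k : ℕ) : Set (Rd d) := {x | ∀ i, 0 ≤ x i ∧ x i < (k : ℝ)}

/-- The homogenized energy density `W₀(F) = inf_{k ≥ 1} k⁻ᵈ E[m_F(·, [0,k)^d)]`. -/
def W0 (P : Measure Ω) (τ : Zd d → Ω → Ω) (E0 : Finset (Zd d))
    (V : Zd d → Ω → Rn n → ℝ) (F : Rd d →L[ℝ] Rn n) : ℝ :=
  ⨅ k : {k : ℕ // 0 < k}, (((k : ℕ) : ℝ) ^ d)⁻¹ * ∫ ω, mF τ E0 V ω F (cube d k) ∂P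

/-- Half-open axis-parallel box `Π_i [aᵢ, bᵢ)`. -/
def halfBox (a b : Fin d → ℝ) : Set (Rd d) := {x | ∀ i, a i ≤ x i ∧ x i < b i}

/-- Open axis-parallel box `Π_i (aᵢ, bᵢ)`. -/
def openBox (a b : Fin d → ℝ) : Set (Rd d) := {x | ∀ i, a i < x i ∧ x i < b i}

/-- Closed axis-parallel box `Π_i [aᵢ, bᵢ]`. -/
def closedBox (a b : Fin d → ℝ) : Set (Rd d) := {x | ∀ i, a i ≤ x i ∧ x i ≤ b i}

/-- Half-open axis-parallel box with integer corners. -/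
def intBox (a b : Zd d) : Set (Rd d) := {x | ∀ i, (a i : ℝ) ≤ x i ∧ x i < (b i : ℝ)}

/-- The periodic cell minimization `W^{(k)}(ω; F)`. -/
def Wper (τ : Zd d → Ω → Ω) (E0 : Finset (Zd d)) (V : Zd d → Ω → Rn n → ℝ)
    (k : ℕ) (ω : Ω) (F : Rd d →L[ℝ] Rn n) : ℝ :=
  ⨅ φ : {φ : Zd d → Rn n // ∀ z z' : Zd d, φ (z + k • z') = φ z},
    ((k : ℝ) ^ d)⁻¹ * energy1 τ E0 V ω (fun z => F (toRd z) + φ.1 z) (cube d k)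

/-!
Set functions `A ↦ m_F(ω; A)` are subadditive, stationary, and grow by at most the energy of the
affine function `g_F` on the added lattice sites, because competitors extend by zero.

The multiparameter ergodic theorem for that energy, proved in `L²` for coboundaries and extended to
integrable functions by a maximal inequality, controls boundary layers. Averaging over all tilings
of a dilated box by translates of `[0,k)^d` then bounds the upper limit by the mean density on
`[0,k)^d`, and hence by the infimum `W₀` over `k`.

For the lower limit, replace `m_F` on each cell `C` by `W₀ |C| + (m_F(C) - W₀ |C|)⁺`. The sum of
these minus `m_F` of the union of the cells is superadditive over disjoint blocks, with mean density
at most the mean excess of the cell density over `W₀`, which vanishes as the cells grow.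
The maximal inequality makes this deficit small relative to the volume, uniformly over all blocks
centered at the origin, so that `m_F` is almost maximal on them. By subadditivity, a smaller value
on a dilated box would have to be compensated in the surrounding annulus, which the upper bound
rules out.
-/

/-- The action `z ↦ τ z` of `ℤ^d` on a probability space by measure preserving maps. -/
structure IsMeasurePreservingAction (P : Measure Ω) (τ : Zd d → Ω → Ω) : Prop where
  zero : τ 0 = id
  add : ∀ x y, τ (x + y) = τ x ∘ τ y
  measurePreserving : ∀ z, MeasurePreserving (τ z) P P

namespace IsMeasurePreservingAction

variable {P : Measure Ω} {τ : Zd d → Ω → Ω}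

lemma zero_apply (hτ : IsMeasurePreservingAction P τ) (ω : Ω) : τ 0 ω = ω := by rw [hτ.zero, id]

lemma add_apply (hτ : IsMeasurePreservingAction P τ) (x y : Zd d) (ω : Ω) :
    τ (x + y) ω = τ x (τ y ω) := by
  rw [hτ.add, Function.comp_apply]

lemma measurable (hτ : IsMeasurePreservingAction P τ) (z : Zd d) : Measurable (τ z) :=
  (hτ.measurePreserving z).measurable

lemma measurableEmbedding (hτ : IsMeasurePreservingAction P τ) (z : Zd d) :
    MeasurableEmbedding (τ z) :=
  MeasurableEquiv.measurableEmbedding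
    { toFun := τ z
      invFun := τ (-z)
      left_inv := fun ω => by rw [← hτ.add_apply, neg_add_cancel, hτ.zero_apply]
      right_inv := fun ω => by rw [← hτ.add_apply, add_neg_cancel, hτ.zero_apply]
      measurable_toFun := hτ.measurable z
      measurable_invFun := hτ.measurable (-z) }

lemma integral_comp (hτ : IsMeasurePreservingAction P τ) (f : Ω → ℝ) (z : Zd d) :
    ∫ ω, f (τ z ω) ∂P = ∫ ω, f ω ∂P :=
  (hτ.measurePreserving z).integral_comp (hτ.measurableEmbedding z) f

lemma integrable_comp (hτ : IsMeasurePreservingAction P τ) {f : Ω → ℝ} (hf : Integrable f P)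
    (z : Zd d) : Integrable (fun ω => f (τ z ω)) P :=
  (hτ.measurePreserving z).integrable_comp_of_integrable hf

lemma integrable_sum (hτ : IsMeasurePreservingAction P τ) {f : Ω → ℝ} (hf : Integrable f P)
    (s : Finset (Zd d)) : Integrable (fun ω => ∑ z ∈ s, f (τ z ω)) P :=
  integrable_finsetSum _ fun z _ => hτ.integrable_comp hf z

lemma integral_sum (hτ : IsMeasurePreservingAction P τ) {f : Ω → ℝ} (hf : Integrable f P)
    (s : Finset (Zd d)) : ∫ ω, ∑ z ∈ s, f (τ z ω) ∂P = s.card * ∫ ω, f ω ∂P := by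
  rw [integral_finsetSum _ fun z _ => hτ.integrable_comp hf z]
  simp only [hτ.integral_comp, Finset.sum_const, nsmul_eq_mul]

lemma ae_forall_comp (hτ : IsMeasurePreservingAction P τ) {p : Ω → Prop} (hp : ∀ᵐ ω ∂P, p ω) :
    ∀ᵐ ω ∂P, ∀ z, p (τ z ω) :=
  ae_all_iff.2 fun z => (hτ.measurePreserving z).quasiMeasurePreserving.ae hp

lemma smul (hτ : IsMeasurePreservingAction P τ) (k : ℕ) :
    IsMeasurePreservingAction P fun z => τ (k • z) where
  zero := by rw [smul_zero, hτ.zero]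
  add x y := by rw [smul_add, hτ.add]
  measurePreserving z := hτ.measurePreserving _

end IsMeasurePreservingAction

/-! ### Lattice balls and a maximal inequality -/

/-- The ball of radius `r` about `z` in `ℤ^d` for the sup distance. -/
def latticeBall (z : Zd d) (r : ℕ) : Finset (Zd d) :=
  Finset.Icc (fun i => z i - r) (fun i => z i + r)

lemma mem_latticeBall {z w : Zd d} {r : ℕ} :
    w ∈ latticeBall z r ↔ ∀ i, z i - r ≤ w i ∧ w i ≤ z i + r := by
  simp only [latticeBall, Finset.mem_Icc, Pi.le_def, forall_and]

lemma coe_latticeBall (z : Zd d) (r : ℕ) : (latticeBall z r : Set (Zd d)) = closedBall z r := by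
  ext w
  rw [Finset.mem_coe, mem_latticeBall, mem_closedBall, dist_pi_le_iff r.cast_nonneg]
  refine forall_congr' fun i => ?_
  rw [Int.dist_eq, ← Int.cast_sub, ← Int.cast_abs,
    ← Int.cast_natCast (R := ℝ) r, Int.cast_le, abs_le]
  omega

lemma card_latticeBall (z : Zd d) (r : ℕ) : (latticeBall z r).card = (2 * r + 1) ^ d := by
  have side (i : Fin d) : (z i + r + 1 - (z i - r)).toNat = 2 * r + 1 := by omega
  simp only [latticeBall, Pi.card_Icc, Int.card_Icc, side, Finset.prod_const, Finset.card_univ,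
    Fintype.card_fin]

lemma map_add_latticeBall (z : Zd d) (r : ℕ) :
    (latticeBall 0 r).map (addRightEmbedding z) = latticeBall z r := by
  rw [latticeBall, Finset.map_add_right_Icc, latticeBall]
  congr 1 <;> ext i <;> simp [add_comm, sub_eq_add_neg]

lemma sum_latticeBall_add (f : Zd d → ℝ) (z : Zd d) (r : ℕ) :
    ∑ w ∈ latticeBall 0 r, f (w + z) = ∑ w ∈ latticeBall z r, f w := by
  simp only [← map_add_latticeBall z, Finset.sum_map, addRightEmbedding_apply]

lemma latticeBall_subset_latticeBall {z w : Zd d} {r s t : ℕ} (hz : z ∈ latticeBall w s)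
    (h : s + r ≤ t) : latticeBall z r ⊆ latticeBall w t := by
  intro x hx
  rw [mem_latticeBall] at *
  intro i
  have := hx i
  have := hz i
  omega

lemma exists_pairwiseDisjoint_latticeBall (t : Finset (Zd d)) (r : Zd d → ℕ) :
    ∃ u ⊆ t, (u : Set (Zd d)).PairwiseDisjoint (fun z => latticeBall z (r z)) ∧
      (t.card : ℝ) ≤ 5 ^ d * ∑ z ∈ u, (2 * r z + 1 : ℝ) ^ d := by
  obtain ⟨u, hut, hdis, hcov⟩ :=
    Vitali.exists_disjoint_subfamily_covering_enlargement_closedBall (t : Set (Zd d)) id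
      (fun z => (r z : ℝ)) (t.sup r : ℕ)
      (fun z hz => Nat.cast_le.2 (Finset.le_sup (Finset.mem_coe.1 hz))) 5 (by norm_num)
  lift u to Finset (Zd d) using t.finite_toSet.subset hut
  refine ⟨u, Finset.coe_subset.1 hut, fun z hz w hw hzw => ?_, ?_⟩
  · have := hdis hz hw hzw
    simpa only [Function.onFun, id, ← coe_latticeBall, Finset.disjoint_coe] using this
  have hcover : t ⊆ u.biUnion fun z => latticeBall z (5 * r z) := by
    intro z hz
    obtain ⟨w, hw, hzw⟩ := hcov z hz
    refine Finset.mem_biUnion.2 ⟨w, hw, ?_⟩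
    rw [← Finset.mem_coe, coe_latticeBall]
    push_cast
    exact hzw (mem_closedBall_self (r z).cast_nonneg)
  have hcard : t.card ≤ ∑ z ∈ u, (2 * (5 * r z) + 1) ^ d := by
    simpa only [card_latticeBall] using (Finset.card_le_card hcover).trans Finset.card_biUnion_le
  rw [Finset.mul_sum]
  refine (Nat.cast_le (α := ℝ).2 hcard).trans ?_
  push_cast
  gcongr with z
  rw [← mul_pow]
  gcongr
  linarith

/-- Superadditivity over disjoint balls of the family in which `G r ∘ σ z` is attached to the ball
of radius `r` about `z`. The empty family shows that `G` is nonnegative. -/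
def IsSuperadditiveOnBalls {X : Type*} (σ : Zd d → X → X) (G : ℕ → X → ℝ) : Prop :=
  ∀ (x : X) (N : ℕ) (s : Finset (Zd d)) (r : Zd d → ℕ),
    (∀ z ∈ s, latticeBall z (r z) ⊆ latticeBall 0 N) →
    (s : Set (Zd d)).PairwiseDisjoint (fun z => latticeBall z (r z)) →
    ∑ z ∈ s, G (r z) (σ z x) ≤ G N x

/-- The points `x` at which `G r x` exceeds `δ` times the volume of the ball for some `r ≤ J`. -/
def exceedance {X : Type*} (d : ℕ) (G : ℕ → X → ℝ) (δ : ℝ) (J : ℕ) : Set X :=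
  ⋃ r ≤ J, {x | δ * (2 * r + 1) ^ d < G r x}

lemma mem_exceedance {X : Type*} {G : ℕ → X → ℝ} {δ : ℝ} {J : ℕ} {x : X} :
    x ∈ exceedance d G δ J ↔ ∃ r ≤ J, δ * (2 * r + 1) ^ d < G r x := by
  simp only [exceedance, mem_iUnion, exists_prop, mem_ofPred_eq]

lemma IsSuperadditiveOnBalls.sum_indicator_exceedance_le {X : Type*} {σ : Zd d → X → X}
    {G : ℕ → X → ℝ} (hG : IsSuperadditiveOnBalls σ G) {δ : ℝ} (hδ : 0 ≤ δ) (J N : ℕ) (x : X) :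
    δ * ∑ z ∈ latticeBall 0 N, (exceedance d G δ J).indicator 1 (σ z x) ≤ 5 ^ d * G (N + J) x := by
  set t := (latticeBall 0 N).filter fun z => σ z x ∈ exceedance d G δ J with ht
  have exists_radius (z : Zd d) :
      ∃ r : ℕ, z ∈ t → r ≤ J ∧ δ * (2 * r + 1) ^ d < G r (σ z x) := by
    by_cases hz : z ∈ t
    · obtain ⟨r, hr⟩ := mem_exceedance.1 (Finset.mem_filter.1 hz).2
      exact ⟨r, fun _ => hr⟩
    · exact ⟨0, fun h => absurd h hz⟩
  choose r hr using exists_radius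
  obtain ⟨u, hut, hdis, hcard⟩ := exists_pairwiseDisjoint_latticeBall t r
  have hsub : ∀ z ∈ u, latticeBall z (r z) ⊆ latticeBall 0 (N + J) := fun z hz =>
    latticeBall_subset_latticeBall (Finset.mem_filter.1 (hut hz)).1
      (by have := (hr z (hut hz)).1; omega)
  have hsum : ∑ z ∈ latticeBall 0 N, (exceedance d G δ J).indicator (1 : X → ℝ) (σ z x)
      = t.card := by
    simp only [ht, Finset.card_filter, indicator_apply, Pi.one_apply, Nat.cast_sum, Nat.cast_ite,
      Nat.cast_one, Nat.cast_zero]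
  calc _ = δ * t.card := by rw [hsum]
    _ ≤ δ * (5 ^ d * ∑ z ∈ u, (2 * (r z : ℝ) + 1) ^ d) := by gcongr
    _ = 5 ^ d * ∑ z ∈ u, δ * (2 * (r z : ℝ) + 1) ^ d := by rw [← Finset.mul_sum]; ring
    _ ≤ 5 ^ d * ∑ z ∈ u, G (r z) (σ z x) := by
        gcongr with z hz
        exact (hr z (hut hz)).2.le
    _ ≤ 5 ^ d * G (N + J) x := by
        gcongr
        exact hG x (N + J) u r hsub hdis

lemma tendsto_ball_volume_ratio (d J : ℕ) :
    Tendsto (fun N : ℕ => ((2 * (N + J : ℕ) + 1 : ℝ) / (2 * N + 1)) ^ d) atTop (𝓝 1) := by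
  have hN : Tendsto (fun N : ℕ => (2 * N + 1 : ℝ)) atTop atTop :=
    tendsto_atTop_add_const_right _ _
      (tendsto_natCast_atTop_atTop.const_mul_atTop (by norm_num))
  have hlim : Tendsto (fun N : ℕ => (1 + 2 * J / (2 * N + 1) : ℝ) ^ d) atTop (𝓝 ((1 + 0) ^ d)) :=
    (tendsto_const_nhds.add (hN.const_div_atTop _)).pow d
  rw [add_zero, one_pow] at hlim
  refine hlim.congr fun N => ?_
  congr 1
  push_cast
  field_simp
  ring

section MaximalInequality

variable {P : Measure Ω} {σ : Zd d → Ω → Ω} {G : ℕ → Ω → ℝ} {γ δ : ℝ}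

lemma nullMeasurableSet_exceedance (hGi : ∀ r, Integrable (G r) P) (δ : ℝ) (J : ℕ) :
    NullMeasurableSet (exceedance d G δ J) P :=
  .biUnion (to_countable _) fun r _ => nullMeasurableSet_lt aemeasurable_const (hGi r).aemeasurable

lemma IsSuperadditiveOnBalls.measureReal_exceedance_le [IsFiniteMeasure P]
    (hσ : IsMeasurePreservingAction P σ) (hG : IsSuperadditiveOnBalls σ G)
    (hGi : ∀ r, Integrable (G r) P) (hγ : ∀ r : ℕ, ∫ ω, G r ω ∂P ≤ γ * (2 * r + 1) ^ d)
    (hδ : 0 < δ) (J : ℕ) : P.real (exceedance d G δ J) ≤ 5 ^ d * γ / δ := by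
  set E := exceedance d G δ J
  have hE : NullMeasurableSet E P := nullMeasurableSet_exceedance hGi δ J
  have hEi : Integrable (E.indicator (1 : Ω → ℝ)) P := (integrable_const 1).indicator₀ hE
  have hEP : ∫ ω, E.indicator (1 : Ω → ℝ) ω ∂P = P.real E := by
    rw [integral_indicator₀ hE]
    simp
  have key (N : ℕ) : δ * ((2 * N + 1) ^ d * P.real E)
      ≤ 5 ^ d * (γ * (2 * (N + J : ℕ) + 1) ^ d) := by
    have := integral_mono ((hσ.integrable_sum hEi (latticeBall 0 N)).const_mul δ)
      ((hGi (N + J)).const_mul (5 ^ d))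
      (fun ω => hG.sum_indicator_exceedance_le hδ.le J N ω)
    rw [integral_const_mul, integral_const_mul, hσ.integral_sum hEi, hEP, card_latticeBall] at this
    push_cast at this
    refine this.trans ?_
    gcongr
    exact_mod_cast hγ (N + J)
  have hlim := (tendsto_ball_volume_ratio d J).const_mul (5 ^ d * γ / δ)
  rw [mul_one] at hlim
  refine ge_of_tendsto' hlim fun N => ?_
  rw [div_pow, div_mul_div_comm, le_div_iff₀ (by positivity)]
  linarith [key N]

theorem IsSuperadditiveOnBalls.maximal_inequality [IsFiniteMeasure P]
    (hσ : IsMeasurePreservingAction P σ) (hG : IsSuperadditiveOnBalls σ G)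
    (hGi : ∀ r, Integrable (G r) P) (hγ : ∀ r : ℕ, ∫ ω, G r ω ∂P ≤ γ * (2 * r + 1) ^ d)
    (hδ : 0 < δ) :
    P {ω | ∃ r : ℕ, δ * (2 * r + 1) ^ d < G r ω} ≤ ENNReal.ofReal (5 ^ d * γ / δ) := by
  have hunion : {ω | ∃ r : ℕ, δ * (2 * r + 1) ^ d < G r ω} = ⋃ J, exceedance d G δ J := by
    ext ω
    simp only [mem_ofPred_eq, mem_iUnion, mem_exceedance]
    exact ⟨fun ⟨r, hr⟩ => ⟨r, r, le_rfl, hr⟩, fun ⟨_, r, _, hr⟩ => ⟨r, hr⟩⟩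
  have hmono : Monotone fun J => exceedance d G δ J := fun J J' hJ ω hω => by
    obtain ⟨r, hr, hlt⟩ := mem_exceedance.1 hω
    exact mem_exceedance.2 ⟨r, hr.trans hJ, hlt⟩
  rw [hunion, hmono.measure_iUnion]
  refine iSup_le fun J => ?_
  rw [← ofReal_measureReal]
  exact ENNReal.ofReal_le_ofReal (hG.measureReal_exceedance_le hσ hGi hγ hδ J)

lemma isSuperadditiveOnBalls_sum (hσ : IsMeasurePreservingAction P σ) {f : Ω → ℝ}
    (hf : ∀ ω, 0 ≤ f ω) :
    IsSuperadditiveOnBalls σ fun r ω => ∑ z ∈ latticeBall 0 r, f (σ z ω) := by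
  intro ω N s r hsub hdis
  simp only [← hσ.add_apply, sum_latticeBall_add (fun w => f (σ w ω))]
  rw [← Finset.sum_biUnion hdis]
  exact Finset.sum_le_sum_of_subset_of_nonneg (Finset.biUnion_subset.2 hsub) fun _ _ _ => hf _

theorem measure_exists_lt_sum_latticeBall_le [IsFiniteMeasure P]
    (hσ : IsMeasurePreservingAction P σ) {f : Ω → ℝ} (hf : ∀ ω, 0 ≤ f ω) (hfi : Integrable f P)
    (hδ : 0 < δ) :
    P {ω | ∃ r : ℕ, δ * (2 * r + 1) ^ d < ∑ z ∈ latticeBall 0 r, f (σ z ω)}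
      ≤ ENNReal.ofReal (5 ^ d * (∫ ω, f ω ∂P) / δ) := by
  refine (isSuperadditiveOnBalls_sum hσ hf).maximal_inequality hσ
    (fun r => hσ.integrable_sum hfi _) (fun r => le_of_eq ?_) hδ
  rw [hσ.integral_sum hfi, card_latticeBall, mul_comm]
  push_cast
  rfl

end MaximalInequality

/-! ### Averages over dilated boxes -/

lemma tendsto_inv_mul_of_abs_sub_le {u : ℝ → ℝ} {a C : ℝ} (hu : ∀ t, |u t - t * a| ≤ C) :
    Tendsto (fun t => t⁻¹ * u t) atTop (𝓝 a) := by
  rw [tendsto_iff_norm_sub_tendsto_zero]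
  have hC : Tendsto (fun t : ℝ => t⁻¹ * C) atTop (𝓝 0) := by
    simpa using tendsto_inv_atTop_zero.mul_const C
  refine squeeze_zero' (Eventually.of_forall fun t => norm_nonneg _) ?_ hC
  filter_upwards [eventually_gt_atTop 0] with t ht
  calc ‖t⁻¹ * u t - a‖ = t⁻¹ * |u t - t * a| := by
        rw [Real.norm_eq_abs, ← abs_of_pos (inv_pos.2 ht), ← abs_mul, abs_of_pos (inv_pos.2 ht)]
        congr 1
        field_simp
    _ ≤ t⁻¹ * C := by gcongr; exact hu t

lemma tendsto_card_Icc {L U : ℝ → Zd d} {a b : Fin d → ℝ} {C : ℝ} (hab : ∀ i, a i ≤ b i)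
    (hL : ∀ t i, |L t i - t * a i| ≤ C) (hU : ∀ t i, |U t i - t * b i| ≤ C) :
    Tendsto (fun t : ℝ => (t ^ d)⁻¹ * (Finset.Icc (L t) (U t)).card) atTop
      (𝓝 (∏ i, (b i - a i))) := by
  have side (i : Fin d) :
      Tendsto (fun t : ℝ => t⁻¹ * (U t i + 1 - L t i).toNat) atTop (𝓝 (b i - a i)) := by
    have h := ((tendsto_inv_mul_of_abs_sub_le fun t => hU t i).add tendsto_inv_atTop_zero).sub
      (tendsto_inv_mul_of_abs_sub_le fun t => hL t i)
    have hmax := h.max (tendsto_const_nhds (x := (0 : ℝ)))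
    rw [add_zero, max_eq_left (sub_nonneg.2 (hab i))] at hmax
    refine hmax.congr' ?_
    filter_upwards [eventually_gt_atTop 0] with t ht
    have hcast : ((U t i + 1 - L t i).toNat : ℝ) = max ((U t i : ℝ) + 1 - L t i) 0 := by
      exact_mod_cast Int.toNat_eq_max (U t i + 1 - L t i)
    rw [hcast, mul_max_of_nonneg _ _ (inv_nonneg.2 ht.le), mul_zero]
    congr 1
    ring
  refine (tendsto_finsetProd Finset.univ fun i _ => side i).congr fun t => ?_
  simp only [Finset.prod_mul_distrib, Finset.prod_const, Finset.card_univ, Fintype.card_fin,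
    inv_pow, Pi.card_Icc, Int.card_Icc, Nat.cast_prod]

lemma abs_ceil_sub_le_one (x : ℝ) : |(⌈x⌉ : ℝ) - x| ≤ 1 :=
  abs_le.2 ⟨by linarith [Int.le_ceil x], by linarith [Int.ceil_lt_add_one x]⟩

lemma abs_floor_sub_le_one (x : ℝ) : |(⌊x⌋ : ℝ) - x| ≤ 1 :=
  abs_le.2 ⟨by linarith [Int.lt_floor_add_one x], by linarith [Int.floor_le x]⟩

/-- The lattice points of the closed box `t • [a, b]`. -/
def latticeBox (a b : Fin d → ℝ) (t : ℝ) : Finset (Zd d) :=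
  Finset.Icc (fun i => ⌈t * a i⌉) (fun i => ⌊t * b i⌋)

lemma mem_latticeBox {a b : Fin d → ℝ} {t : ℝ} {z : Zd d} :
    z ∈ latticeBox a b t ↔ ∀ i, t * a i ≤ z i ∧ z i ≤ t * b i := by
  simp only [latticeBox, Finset.mem_Icc, Pi.le_def, Int.ceil_le, Int.le_floor, forall_and]

lemma tendsto_card_latticeBox {a b : Fin d → ℝ} (hab : ∀ i, a i ≤ b i) :
    Tendsto (fun t : ℝ => (t ^ d)⁻¹ * (latticeBox a b t).card) atTop (𝓝 (∏ i, (b i - a i))) :=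
  tendsto_card_Icc hab (fun _ _ => abs_ceil_sub_le_one _) (fun _ _ => abs_floor_sub_le_one _)

lemma exists_latticeBox_subset_latticeBall (a b : Fin d → ℝ) :
    ∃ K : ℝ, 0 < K ∧ ∀ t ≥ 1, ∃ r : ℕ, latticeBox a b t ⊆ latticeBall 0 r ∧
      (2 * r + 1 : ℝ) ^ d ≤ K * t ^ d := by
  set M := ‖a‖ + ‖b‖
  refine ⟨(2 * M + 3) ^ d, by positivity, fun t ht => ⟨⌈t * M⌉₊, fun z hz => ?_, ?_⟩⟩
  · rw [mem_latticeBall]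
    intro i
    have hzi := mem_latticeBox.1 hz i
    have hceil := Nat.le_ceil (t * M)
    have ha : -M ≤ a i := by
      linarith [neg_abs_le (a i), norm_le_pi_norm a i, norm_nonneg b, Real.norm_eq_abs (a i)]
    have hb : b i ≤ M := by
      linarith [le_abs_self (b i), norm_le_pi_norm b i, norm_nonneg a, Real.norm_eq_abs (b i)]
    have hlo : -(⌈t * M⌉₊ : ℝ) ≤ z i := by nlinarith
    have hhi : (z i : ℝ) ≤ ⌈t * M⌉₊ := by nlinarith
    rw [Pi.zero_apply, zero_sub, zero_add]
    exact ⟨by exact_mod_cast hlo, by exact_mod_cast hhi⟩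
  · rw [← mul_pow]
    gcongr
    nlinarith [Nat.ceil_lt_add_one (show 0 ≤ t * M by positivity)]

/-- The averages of `f` along the orbit of `ω` over dilated boxes converge to the mean of `f`. -/
def BoxAveragesConverge (P : Measure Ω) (τ : Zd d → Ω → Ω) (f : Ω → ℝ) (ω : Ω) : Prop :=
  ∀ a b : Fin d → ℝ, (∀ i, a i ≤ b i) →
    Tendsto (fun t : ℝ => (t ^ d)⁻¹ * ∑ z ∈ latticeBox a b t, f (τ z ω)) atTop
      (𝓝 ((∏ i, (b i - a i)) * ∫ ω, f ω ∂P))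

section BoxAverages

variable {P : Measure Ω} {τ : Zd d → Ω → Ω} {f g : Ω → ℝ} {ω : Ω}

namespace BoxAveragesConverge

lemma congr (hf : BoxAveragesConverge P τ f ω) (hfg : f =ᵐ[P] g)
    (horbit : ∀ z, f (τ z ω) = g (τ z ω)) : BoxAveragesConverge P τ g ω := by
  intro a b hab
  simpa only [horbit, integral_congr_ae hfg] using hf a b hab

lemma add (hf : BoxAveragesConverge P τ f ω) (hg : BoxAveragesConverge P τ g ω)
    (hfi : Integrable f P) (hgi : Integrable g P) :
    BoxAveragesConverge P τ (fun ω => f ω + g ω) ω := by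
  intro a b hab
  simpa only [Finset.sum_add_distrib, integral_add hfi hgi, mul_add]
    using (hf a b hab).add (hg a b hab)

lemma const_mul (hf : BoxAveragesConverge P τ f ω) (c : ℝ) :
    BoxAveragesConverge P τ (fun ω => c * f ω) ω := by
  intro a b hab
  simpa only [← Finset.mul_sum, integral_const_mul, mul_left_comm c] using (hf a b hab).const_mul c

lemma const [IsProbabilityMeasure P] (c : ℝ) : BoxAveragesConverge P τ (fun _ => c) ω := by
  intro a b hab
  simpa only [Finset.sum_const, nsmul_eq_mul, integral_const, probReal_univ, one_smul, mul_assoc]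
    using (tendsto_card_latticeBox hab).mul_const c

lemma of_approx (happ : ∀ ε > 0, ∃ g : Ω → ℝ, BoxAveragesConverge P τ g ω ∧
      |∫ ω, f ω ∂P - ∫ ω, g ω ∂P| ≤ ε ∧
      ∀ r : ℕ, ∑ z ∈ latticeBall 0 r, |f (τ z ω) - g (τ z ω)| ≤ ε * (2 * r + 1) ^ d) :
    BoxAveragesConverge P τ f ω := by
  intro a b hab
  obtain ⟨K, hK, hball⟩ := exists_latticeBox_subset_latticeBall a b
  set v := ∏ i, (b i - a i)
  have hv : 0 ≤ v := Finset.prod_nonneg fun i _ => sub_nonneg.2 (hab i)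
  rw [Metric.tendsto_nhds]
  intro ε hε
  set η := ε / (2 * (K + v)) with hη
  obtain ⟨g, hg, hint, hsum⟩ := happ η (by positivity)
  filter_upwards [eventually_ge_atTop 1,
    Metric.tendsto_nhds.1 (hg a b hab) (ε / 2) (by positivity)] with t ht hgt
  have htd : 0 < t ^ d := by positivity
  have hsums : |(t ^ d)⁻¹ * ∑ z ∈ latticeBox a b t, f (τ z ω)
      - (t ^ d)⁻¹ * ∑ z ∈ latticeBox a b t, g (τ z ω)| ≤ η * K := by
    obtain ⟨r, hr, hrK⟩ := hball t ht
    rw [← mul_sub, abs_mul, abs_of_pos (inv_pos.2 htd), ← Finset.sum_sub_distrib,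
      inv_mul_le_iff₀ htd]
    calc |∑ z ∈ latticeBox a b t, (f (τ z ω) - g (τ z ω))|
        ≤ ∑ z ∈ latticeBox a b t, |f (τ z ω) - g (τ z ω)| := Finset.abs_sum_le_sum_abs _ _
      _ ≤ ∑ z ∈ latticeBall 0 r, |f (τ z ω) - g (τ z ω)| :=
          Finset.sum_le_sum_of_subset_of_nonneg hr fun _ _ _ => abs_nonneg _
      _ ≤ η * (K * t ^ d) := (hsum r).trans (by gcongr)
      _ = t ^ d * (η * K) := by ring
  have hmeans : |v * ∫ ω, g ω ∂P - v * ∫ ω, f ω ∂P| ≤ η * v := by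
    rw [← mul_sub, abs_mul, abs_of_nonneg hv, abs_sub_comm, mul_comm]
    gcongr
  have hηε : η * K + η * v = ε / 2 := by rw [hη]; field_simp
  rw [Real.dist_eq, abs_lt] at hgt
  rw [abs_le] at hsums hmeans
  rw [Real.dist_eq, abs_lt]
  constructor <;> linarith

end BoxAveragesConverge

lemma ae_exists_sum_latticeBall_le [IsFiniteMeasure P] (hτ : IsMeasurePreservingAction P τ)
    {h : ℕ → Ω → ℝ} (h0 : ∀ j ω, 0 ≤ h j ω) (hi : ∀ j, Integrable (h j) P)
    (hlim : Tendsto (fun j => ∫ ω, h j ω ∂P) atTop (𝓝 0)) {δ : ℝ} (hδ : 0 < δ) :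
    ∀ᵐ ω ∂P, ∃ j, ∀ r : ℕ, ∑ z ∈ latticeBall 0 r, h j (τ z ω) ≤ δ * (2 * r + 1) ^ d := by
  rw [ae_iff]
  have hbound (j : ℕ) : P {ω | ¬ ∃ j, ∀ r : ℕ,
      ∑ z ∈ latticeBall 0 r, h j (τ z ω) ≤ δ * (2 * r + 1) ^ d} ≤
      ENNReal.ofReal (5 ^ d * (∫ ω, h j ω ∂P) / δ) := by
    refine (measure_mono fun ω hω => ?_).trans
      (measure_exists_lt_sum_latticeBall_le hτ (h0 j) (hi j) hδ)
    simp only [mem_ofPred_eq, not_exists, not_forall, not_le] at hω ⊢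
    exact hω j
  have hzero : Tendsto (fun j => ENNReal.ofReal (5 ^ d * (∫ ω, h j ω ∂P) / δ)) atTop (𝓝 0) := by
    simpa using ENNReal.tendsto_ofReal ((hlim.const_mul (5 ^ d)).div_const δ)
  exact le_antisymm (ge_of_tendsto' hzero hbound) bot_le

lemma ae_boxAveragesConverge_of_approx [IsFiniteMeasure P] (hτ : IsMeasurePreservingAction P τ)
    (hfi : Integrable f P)
    (happ : ∀ ε > 0, ∃ g : Ω → ℝ, Integrable g P ∧ ∫ ω, |f ω - g ω| ∂P ≤ ε ∧
      ∀ᵐ ω ∂P, BoxAveragesConverge P τ g ω) :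
    ∀ᵐ ω ∂P, BoxAveragesConverge P τ f ω := by
  choose g hgi hfg hg using fun j : ℕ => happ (1 / (j + 1)) (by positivity)
  have hnonneg (j : ℕ) : 0 ≤ ∫ ω, |f ω - g j ω| ∂P := integral_nonneg fun ω => abs_nonneg _
  have hlim : Tendsto (fun j => ∫ ω, |f ω - g j ω| ∂P) atTop (𝓝 0) :=
    squeeze_zero hnonneg hfg tendsto_one_div_add_atTop_nhds_zero_nat
  have hmax : ∀ᵐ ω ∂P, ∀ m : ℕ, ∃ j, ∀ r : ℕ, ∑ z ∈ latticeBall 0 r,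
      |f (τ z ω) - g (j + m) (τ z ω)| ≤ 1 / (m + 1) * (2 * r + 1) ^ d :=
    ae_all_iff.2 fun m => ae_exists_sum_latticeBall_le hτ (fun _ _ => abs_nonneg _)
      (fun j => (hfi.sub (hgi (j + m))).abs) (hlim.comp (tendsto_add_atTop_nat m)) (by positivity)
  filter_upwards [hmax, ae_all_iff.2 hg] with ω hmaxω hgω
  refine BoxAveragesConverge.of_approx fun ε hε => ?_
  obtain ⟨m, hm⟩ := exists_nat_one_div_lt hε
  obtain ⟨j, hj⟩ := hmaxω m
  refine ⟨g (j + m), hgω (j + m), ?_, fun r => (hj r).trans (by gcongr)⟩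
  rw [← integral_sub hfi (hgi (j + m))]
  refine abs_integral_le_integral_abs.trans ((hfg (j + m)).trans (le_trans ?_ hm.le))
  gcongr
  exact Nat.le_add_left m j

end BoxAverages

/-! ### The multiparameter ergodic theorem -/

section Coboundaries

variable {P : Measure Ω} {τ : Zd d → Ω → Ω} {f g : Ω → ℝ}

lemma abs_sum_sub_sum_le {ι : Type*} {s s' c : Finset ι} {f : ι → ℝ} {C : ℝ}
    (hf : ∀ x, |f x| ≤ C) (hs : c ⊆ s) (hs' : c ⊆ s') (hcard : s'.card = s.card) :
    |∑ x ∈ s', f x - ∑ x ∈ s, f x| ≤ 2 * C * (s.card - c.card) := by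
  have hdiff {u : Finset ι} (hu : c ⊆ u) :
      |∑ x ∈ u, f x - ∑ x ∈ c, f x| ≤ (u.card - c.card) * C := by
    rw [← Finset.sum_sdiff_eq_sub hu, ← Nat.cast_sub (Finset.card_le_card hu),
      ← Finset.card_sdiff_of_subset hu, ← nsmul_eq_mul]
    exact (Finset.abs_sum_le_sum_abs _ _).trans (Finset.sum_le_card_nsmul _ _ _ fun x _ => hf x)
  have h := abs_sub_le (∑ x ∈ s', f x) (∑ x ∈ c, f x) (∑ x ∈ s, f x)
  have h' := hdiff hs'
  rw [hcard] at h'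
  rw [abs_sub_comm (∑ x ∈ c, f x)] at h
  linarith [hdiff hs]

lemma abs_sum_latticeBox_coboundary_le (hτ : IsMeasurePreservingAction P τ) {C : ℝ}
    (hC : ∀ ω, |g ω| ≤ C) (a b : Fin d → ℝ) (t : ℝ) (i : Fin d) (ω : Ω) :
    |∑ z ∈ latticeBox a b t, (g (τ (stdb i) (τ z ω)) - g (τ z ω))| ≤
      2 * C * ((latticeBox a b t).card -
        (Finset.Icc (fun j => ⌈t * a j⌉ + stdb i j) (fun j => ⌊t * b j⌋)).card) := by
  have hstdb (j : Fin d) : 0 ≤ stdb i j := by unfold stdb; split_ifs <;> norm_num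
  set s := latticeBox a b t with hs
  set s' := s.map (addLeftEmbedding (stdb i)) with hs'
  have hs'_Icc :
      s' = Finset.Icc (fun j => ⌈t * a j⌉ + stdb i j) (fun j => ⌊t * b j⌋ + stdb i j) := by
    rw [hs', hs, latticeBox, Finset.map_add_left_Icc]
    congr 1 <;> ext j <;> exact add_comm _ _
  have hshift : ∑ z ∈ s, g (τ (stdb i) (τ z ω)) = ∑ z ∈ s', g (τ z ω) := by
    simp only [hs', Finset.sum_map, addLeftEmbedding_apply, hτ.add_apply]
  rw [Finset.sum_sub_distrib, hshift]
  refine abs_sum_sub_sum_le (fun z => hC _) (Finset.Icc_subset_Icc (fun j => ?_) le_rfl) ?_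
    (Finset.card_map _)
  · exact le_add_of_nonneg_right (hstdb j)
  · rw [hs'_Icc]
    exact Finset.Icc_subset_Icc le_rfl fun j => le_add_of_nonneg_right (hstdb j)

lemma boxAveragesConverge_coboundary_of_bounded (hτ : IsMeasurePreservingAction P τ)
    (hgi : Integrable g P) {C : ℝ} (hC : ∀ ω, |g ω| ≤ C) (i : Fin d) (ω : Ω) :
    BoxAveragesConverge P τ (fun ω => g (τ (stdb i) ω) - g ω) ω := by
  intro a b hab
  rw [integral_sub (hτ.integrable_comp hgi _) hgi, hτ.integral_comp, sub_self, mul_zero]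
  have hcore : Tendsto (fun t : ℝ => (t ^ d)⁻¹ *
      (Finset.Icc (fun j => ⌈t * a j⌉ + stdb i j) (fun j => ⌊t * b j⌋)).card) atTop
      (𝓝 (∏ i, (b i - a i))) := by
    refine tendsto_card_Icc (C := 2) hab (fun t j => ?_)
      (fun t j => (abs_floor_sub_le_one _).trans one_le_two)
    have hstdb : |((stdb i j : ℤ) : ℝ)| ≤ 1 := by unfold stdb; split_ifs <;> norm_num
    push_cast
    rw [add_sub_right_comm]
    exact (abs_add_le _ _).trans (by linarith [abs_ceil_sub_le_one (t * a j)])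
  have hbound := ((tendsto_card_latticeBox hab).sub hcore).const_mul (2 * C)
  rw [sub_self, mul_zero] at hbound
  refine squeeze_zero_norm' ?_ hbound
  filter_upwards [eventually_gt_atTop 0] with t ht
  rw [Real.norm_eq_abs, abs_mul, abs_of_pos (by positivity), ← mul_sub, mul_left_comm]
  gcongr
  exact abs_sum_latticeBox_coboundary_le hτ hC a b t i ω

lemma integral_abs_sub_eq_eLpNorm (hf : Integrable f P) (hg : Integrable g P) :
    ENNReal.ofReal (∫ ω, |f ω - g ω| ∂P) = eLpNorm (f - g) 1 P := by
  rw [eLpNorm_one_eq_lintegral_enorm, ← ofReal_integral_norm_eq_lintegral_enorm (hf.sub hg)]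
  rfl

lemma exists_simpleFunc_integral_abs_sub_le (hf : Integrable f P) {ε : ℝ} (hε : 0 < ε) :
    ∃ g : SimpleFunc Ω ℝ, Integrable g P ∧ ∫ ω, |f ω - g ω| ∂P ≤ ε := by
  obtain ⟨g, hfg, hg⟩ := (memLp_one_iff_integrable.2 hf).exists_simpleFunc_eLpNorm_sub_lt
    ENNReal.one_ne_top (ENNReal.ofReal_pos.2 hε).ne'
  rw [memLp_one_iff_integrable] at hg
  rw [← integral_abs_sub_eq_eLpNorm hf hg] at hfg
  exact ⟨g, hg, ((ENNReal.ofReal_lt_ofReal_iff hε).1 hfg).le⟩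

lemma integral_abs_coboundary_sub_le (hτ : IsMeasurePreservingAction P τ) (hf : Integrable f P)
    (hg : Integrable g P) (z : Zd d) :
    ∫ ω, |f (τ z ω) - f ω - (g (τ z ω) - g ω)| ∂P ≤ 2 * ∫ ω, |f ω - g ω| ∂P := by
  have hfg : Integrable (fun ω => |f ω - g ω|) P := (hf.sub hg).abs
  calc ∫ ω, |f (τ z ω) - f ω - (g (τ z ω) - g ω)| ∂P
      ≤ ∫ ω, (|f (τ z ω) - g (τ z ω)| + |f ω - g ω|) ∂P := by
        refine integral_mono (((hτ.integrable_comp hf z).sub hf).sub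
          ((hτ.integrable_comp hg z).sub hg)).abs ((hτ.integrable_comp hfg z).add hfg) fun ω => ?_
        dsimp only
        rw [sub_sub_sub_comm]
        exact abs_sub _ _
    _ = 2 * ∫ ω, |f ω - g ω| ∂P := by
        rw [integral_add (hτ.integrable_comp hfg z) hfg, hτ.integral_comp (fun ω => |f ω - g ω|),
          two_mul]

lemma ae_boxAveragesConverge_coboundary [IsFiniteMeasure P] (hτ : IsMeasurePreservingAction P τ)
    (hf : Integrable f P) (i : Fin d) :
    ∀ᵐ ω ∂P, BoxAveragesConverge P τ (fun ω => f (τ (stdb i) ω) - f ω) ω := by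
  refine ae_boxAveragesConverge_of_approx hτ ((hτ.integrable_comp hf _).sub hf) fun ε hε => ?_
  obtain ⟨g, hg, hfg⟩ := exists_simpleFunc_integral_abs_sub_le hf (half_pos hε)
  obtain ⟨C, hC⟩ := g.exists_forall_norm_le
  refine ⟨fun ω => g (τ (stdb i) ω) - g ω, (hτ.integrable_comp hg _).sub hg, ?_,
    ae_of_all _ (boxAveragesConverge_coboundary_of_bounded hτ hg hC i)⟩
  linarith [integral_abs_coboundary_sub_le hτ hf hg (stdb i)]

end Coboundaries

/-- A measure preserving action of `ℤ^d` whose invariant events are trivial. -/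
structure IsErgodicAction (P : Measure Ω) (τ : Zd d → Ω → Ω) : Prop
    extends IsMeasurePreservingAction P τ where
  zero_or_one : ∀ B : Set Ω, MeasurableSet B → (∀ z, τ z ⁻¹' B = B) → P B = 0 ∨ P B = 1

section ErgodicTheorem

variable {P : Measure Ω} {τ : Zd d → Ω → Ω} {f : Ω → ℝ}

lemma IsMeasurePreservingAction.ae_eq_comp_of_forall_stdb (hτ : IsMeasurePreservingAction P τ)
    (hf : ∀ i, f ∘ τ (stdb i) =ᵐ[P] f) (z : Zd d) : f ∘ τ z =ᵐ[P] f := by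
  have comp {g h : Ω → ℝ} (hgh : g =ᵐ[P] h) (x : Zd d) : g ∘ τ x =ᵐ[P] h ∘ τ x :=
    (hτ.measurePreserving x).quasiMeasurePreserving.ae_eq hgh
  let periods : AddSubgroup (Zd d) :=
    { carrier := {z | f ∘ τ z =ᵐ[P] f}
      zero_mem' := by rw [mem_ofPred_eq, hτ.zero, Function.comp_id]
      add_mem' := fun {x y} hx hy => by
        rw [mem_ofPred_eq, hτ.add, ← Function.comp_assoc]
        exact (comp hx y).trans hy
      neg_mem' := fun {x} hx => by
        have := comp hx (-x)
        rw [Function.comp_assoc, ← hτ.add, add_neg_cancel, hτ.zero] at this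
        exact this.symm }
  have hz : z = ∑ i, z i • stdb i := by
    ext j
    simp [Finset.sum_apply, stdb]
  have hmem : z ∈ periods := hz ▸ periods.sum_mem fun i _ => periods.zsmul_mem (hf i) _
  exact hmem

namespace IsErgodicAction

variable [IsProbabilityMeasure P]

-- An almost invariant event agrees almost surely with the intersection of its translates.
lemma ae_mem_or_ae_notMem (hτ : IsErgodicAction P τ) {s : Set Ω} (hs : MeasurableSet s)
    (hinv : ∀ z, ∀ᵐ ω ∂P, τ z ω ∈ s ↔ ω ∈ s) : (∀ᵐ ω ∂P, ω ∈ s) ∨ ∀ᵐ ω ∂P, ω ∉ s := by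
  set B := ⋂ z, τ z ⁻¹' s
  have hB : MeasurableSet B := .iInter fun z => hτ.measurable z hs
  have hBinv (z : Zd d) : τ z ⁻¹' B = B := by
    ext ω
    simp only [B, mem_preimage, mem_iInter, ← hτ.add_apply]
    exact ⟨fun h w => by simpa using h (w - z), fun h w => h _⟩
  have hae : ∀ᵐ ω ∂P, ω ∈ B ↔ ω ∈ s := by
    filter_upwards [ae_all_iff.2 hinv] with ω hω
    simp only [B, mem_iInter, mem_preimage, hω, forall_const]
  rcases hτ.zero_or_one B hB hBinv with h | h
  · right
    filter_upwards [measure_eq_zero_iff_ae_notMem.1 h, hae] with ω hω hωB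
    rwa [← hωB]
  · left
    filter_upwards [(mem_ae_iff_prob_eq_one hB).2 h, hae] with ω hω hωB
    rwa [← hωB]

lemma exists_ae_eq_const (hτ : IsErgodicAction P τ) (hf : Measurable f)
    (hinv : ∀ i, f ∘ τ (stdb i) =ᵐ[P] f) : ∃ c : ℝ, f =ᵐ[P] fun _ => c := by
  refine exists_eventuallyEq_const_of_forall_separating (MeasurableSet : Set ℝ → Prop)
    fun U hU => hτ.ae_mem_or_ae_notMem (s := f ⁻¹' U) (hf hU) fun z => ?_
  filter_upwards [hτ.ae_eq_comp_of_forall_stdb hinv z] with ω hω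
  rw [mem_preimage, mem_preimage, ← hω, Function.comp_apply]

end IsErgodicAction

lemma integrable_Lp_two [IsFiniteMeasure P] (x : Lp ℝ 2 P) : Integrable x P :=
  (Lp.memLp x).integrable one_le_two

lemma integral_abs_sub_le_dist [IsProbabilityMeasure P] (x y : Lp ℝ 2 P) :
    ∫ ω, |x ω - y ω| ∂P ≤ dist x y := by
  have hx := integrable_Lp_two x
  have hy := integrable_Lp_two y
  rw [← ENNReal.ofReal_le_ofReal_iff dist_nonneg, ← edist_dist, Lp.edist_def,
    integral_abs_sub_eq_eLpNorm hx hy]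
  exact eLpNorm_le_eLpNorm_of_exponent_le one_le_two (hx.sub hy).aestronglyMeasurable

lemma ae_boxAveragesConverge_congr {g : Ω → ℝ} (hτ : IsMeasurePreservingAction P τ)
    (hfg : f =ᵐ[P] g) (hf : ∀ᵐ ω ∂P, BoxAveragesConverge P τ f ω) :
    ∀ᵐ ω ∂P, BoxAveragesConverge P τ g ω := by
  filter_upwards [hf, hτ.ae_forall_comp hfg] with ω hω horbit
  exact hω.congr hfg horbit

/-- The square integrable functions satisfying the almost sure ergodic theorem on boxes. -/
def boxAveragesSubmodule [IsProbabilityMeasure P] (hτ : IsMeasurePreservingAction P τ) :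
    Submodule ℝ (Lp ℝ 2 P) where
  carrier := {x | ∀ᵐ ω ∂P, BoxAveragesConverge P τ x ω}
  zero_mem' := ae_boxAveragesConverge_congr hτ (Lp.coeFn_zero ℝ 2 P).symm
    (ae_of_all _ fun _ => .const 0)
  add_mem' := fun {x y} hx hy => by
    refine ae_boxAveragesConverge_congr hτ (Lp.coeFn_add x y).symm ?_
    filter_upwards [hx, hy] with ω hωx hωy
    exact hωx.add hωy (integrable_Lp_two x) (integrable_Lp_two y)
  smul_mem' := fun c x hx => by
    refine ae_boxAveragesConverge_congr hτ (Lp.coeFn_smul c x).symm ?_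
    filter_upwards [hx] with ω hω
    exact hω.const_mul c

section Submodule

variable [IsProbabilityMeasure P]

lemma topologicalClosure_boxAveragesSubmodule_le (hτ : IsMeasurePreservingAction P τ) :
    (boxAveragesSubmodule hτ).topologicalClosure ≤ boxAveragesSubmodule hτ := by
  intro x hx
  refine ae_boxAveragesConverge_of_approx hτ (integrable_Lp_two x) fun ε hε => ?_
  obtain ⟨y, hy, hxy⟩ := Metric.mem_closure_iff.1 (show x ∈ closure _ from hx) ε hε
  exact ⟨y, integrable_Lp_two y, (integral_abs_sub_le_dist x y).trans hxy.le, hy⟩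

lemma ae_eq_comp_stdb_of_mem_orthogonal (hτ : IsMeasurePreservingAction P τ) {x : Lp ℝ 2 P}
    (hx : x ∈ (boxAveragesSubmodule hτ)ᗮ) (i : Fin d) : x ∘ τ (stdb i) =ᵐ[P] x := by
  set U := Lp.compMeasurePreservingₗᵢ (E := ℝ) (p := 2) ℝ _ (hτ.measurePreserving (stdb i))
  have hU : U x =ᵐ[P] x ∘ τ (stdb i) := Lp.coeFn_compMeasurePreserving x _
  have hmem : U x - x ∈ boxAveragesSubmodule hτ := by
    refine ae_boxAveragesConverge_congr hτ ?_
      (ae_boxAveragesConverge_coboundary hτ (integrable_Lp_two x) i)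
    exact ((Lp.coeFn_sub _ _).trans (hU.sub .rfl)).symm
  have hinner := Submodule.inner_right_of_mem_orthogonal hmem hx
  rw [inner_sub_left, real_inner_self_eq_norm_sq] at hinner
  have hnorm : ‖U x - x‖ ^ 2 = 0 := by
    rw [norm_sub_sq_real, U.norm_map]
    linarith
  have hfix : U x = x := sub_eq_zero.1 (norm_eq_zero.1 (pow_eq_zero_iff two_ne_zero |>.1 hnorm))
  rw [hfix] at hU
  exact hU.symm

lemma boxAveragesSubmodule_orthogonal_eq_bot (hτ : IsErgodicAction P τ) :
    (boxAveragesSubmodule hτ.toIsMeasurePreservingAction)ᗮ = ⊥ := by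
  refine (Submodule.eq_bot_iff _).2 fun x hx => ?_
  obtain ⟨c, hc⟩ := hτ.exists_ae_eq_const (Lp.stronglyMeasurable x).measurable
    (ae_eq_comp_stdb_of_mem_orthogonal _ hx)
  have hone : Lp.const 2 P (1 : ℝ) ∈ boxAveragesSubmodule hτ.toIsMeasurePreservingAction :=
    ae_boxAveragesConverge_congr hτ.toIsMeasurePreservingAction (Lp.coeFn_const 2 P (1 : ℝ)).symm
      (ae_of_all _ fun _ => .const 1)
  have hinner := Submodule.inner_right_of_mem_orthogonal hone hx
  have hmean : ∫ ω, inner ℝ (Lp.const 2 P (1 : ℝ) ω) (x ω) ∂P = c := by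
    rw [integral_congr_ae (g := fun _ => c), integral_const, probReal_univ, one_smul]
    filter_upwards [hc] with ω hx
    simp [hx]
  rw [L2.inner_def, hmean] at hinner
  rw [Lp.eq_zero_iff_ae_eq_zero]
  filter_upwards [hc] with ω hω
  rw [hω, hinner, Pi.zero_apply]

lemma IsErgodicAction.ae_boxAveragesConverge_Lp_two (hτ : IsErgodicAction P τ) (x : Lp ℝ 2 P) :
    ∀ᵐ ω ∂P, BoxAveragesConverge P τ x ω := by
  have hdense := Submodule.topologicalClosure_eq_top_iff.2
    (boxAveragesSubmodule_orthogonal_eq_bot hτ)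
  exact topologicalClosure_boxAveragesSubmodule_le _ (hdense ▸ Submodule.mem_top)

theorem IsErgodicAction.ae_boxAveragesConverge (hτ : IsErgodicAction P τ)
    (hf : Integrable f P) : ∀ᵐ ω ∂P, BoxAveragesConverge P τ f ω := by
  have hτ' := hτ.toIsMeasurePreservingAction
  refine ae_boxAveragesConverge_of_approx hτ' hf fun ε hε => ?_
  obtain ⟨g, hg, hfg⟩ := exists_simpleFunc_integral_abs_sub_le hf hε
  have hg2 : MemLp g 2 P := g.memLp_of_isFiniteMeasure 2 P
  exact ⟨g, hg, hfg, ae_boxAveragesConverge_congr hτ' hg2.coeFn_toLp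
    (hτ.ae_boxAveragesConverge_Lp_two (hg2.toLp g))⟩

end Submodule

end ErgodicTheorem

/-! ### Stationary subadditive processes -/

@[simp] lemma toRd_apply (z : Zd d) (i : Fin d) : toRd z i = (z i : ℝ) := rfl

lemma toRd_add (x y : Zd d) : toRd (x + y) = toRd x + toRd y := by ext i; simp

lemma mem_toRd_vadd_cube {x : Zd d} {k : ℕ} {p : Rd d} :
    p ∈ toRd x +ᵥ cube d k ↔ ∀ i, (x i : ℝ) ≤ p i ∧ p i < x i + k := by
  simp only [Set.mem_vadd_set_iff_neg_vadd_mem, cube, Set.mem_ofPred_eq, vadd_eq_add,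
    PiLp.add_apply, PiLp.neg_apply, toRd_apply, le_neg_add_iff_add_le, neg_add_lt_iff_lt_add,
    add_zero]

lemma disjoint_toRd_vadd_cube {x y : Zd d} {k : ℕ} (hmod : ∀ i, x i % k = y i % k)
    (hxy : x ≠ y) : Disjoint (toRd x +ᵥ cube d k) (toRd y +ᵥ cube d k) := by
  rw [Set.disjoint_left]
  intro p hx hy
  rw [mem_toRd_vadd_cube] at hx hy
  refine hxy (funext fun i => ?_)
  have hlt : (x i : ℝ) < y i + k := (hx i).1.trans_lt (hy i).2
  have hlt' : (y i : ℝ) < x i + k := (hy i).1.trans_lt (hx i).2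
  norm_cast at hlt hlt'
  have := Int.eq_zero_of_abs_lt_dvd (Int.ModEq.dvd (hmod i)) (by rw [abs_lt]; lia)
  lia

lemma exists_toRd_mem_vadd_cube {k : ℕ} (hk : 0 < k) (y z : Zd d) :
    ∃ x : Zd d, (∀ i, x i % k = y i % k) ∧ toRd z ∈ toRd x +ᵥ cube d k := by
  have hk' : (0 : ℤ) < k := by exact_mod_cast hk
  refine ⟨fun i => z i - (z i - y i) % k, fun i => ?_, ?_⟩
  · rw [Int.sub_emod, Int.emod_emod, ← Int.sub_emod, sub_sub_cancel]
  · rw [mem_toRd_vadd_cube]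
    intro i
    have hnonneg := Int.emod_nonneg (z i - y i) hk'.ne'
    have hlt := Int.emod_lt_of_pos (z i - y i) hk'
    simp only [toRd_apply]
    exact ⟨by exact_mod_cast (by lia : z i - (z i - y i) % k ≤ z i),
      by exact_mod_cast (by lia : z i < z i - (z i - y i) % k + k)⟩

lemma isBounded_closedBox (a b : Fin d → ℝ) : Bornology.IsBounded (closedBox a b) :=
  (EuclideanSpace.equiv (Fin d) ℝ).antilipschitz.isBounded_preimage
    (Metric.isBounded_Icc a b) |>.subset fun _ hx => ⟨fun i => (hx i).1, fun i => (hx i).2⟩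

lemma cube_subset_closedBox (k : ℕ) : cube d k ⊆ closedBox (fun _ => 0) fun _ => k :=
  fun _ hx i => ⟨(hx i).1, (hx i).2.le⟩

lemma isBounded_cube (k : ℕ) : Bornology.IsBounded (cube d k) :=
  (isBounded_closedBox _ _).subset (cube_subset_closedBox k)

lemma finite_setOf_toRd_mem {A : Set (Rd d)} (hA : Bornology.IsBounded A) :
    {z : Zd d | toRd z ∈ A}.Finite := by
  obtain ⟨r, hr⟩ := hA.subset_closedBall 0
  refine (latticeBox (fun _ => -r) (fun _ => r) 1).finite_toSet.subset fun z hz => ?_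
  rw [Finset.mem_coe, mem_latticeBox]
  intro i
  have hle : |(z i : ℝ)| ≤ r := by
    simpa using (PiLp.norm_apply_le (toRd z) i).trans (mem_closedBall_zero_iff.1 (hr hz))
  simpa using abs_le.1 hle

/-- A nonnegative set process `m` which is subadditive on bounded sets, stationary under the
action `τ`, and for which adding lattice points to a set costs at most `h` per point. Only the
inequality half of stationarity is required. -/
structure IsStationarySubadditive (P : Measure Ω) (τ : Zd d → Ω → Ω) (m : Ω → Set (Rd d) → ℝ)
    (h : Ω → ℝ) : Prop where
  nonneg : ∀ ω A, 0 ≤ m ω A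
  empty : ∀ ω, m ω ∅ = 0
  union_le : ∀ ω A B, Bornology.IsBounded A → Bornology.IsBounded B → Disjoint A B →
    m ω (A ∪ B) ≤ m ω A + m ω B
  le_add_sum : ∀ ω A B (U : Finset (Zd d)), Bornology.IsBounded B → A ⊆ B →
    (∀ z, toRd z ∈ B \ A → z ∈ U) → m ω B ≤ m ω A + ∑ z ∈ U, h (τ z ω)
  vadd_le : ∀ ω z A, m ω (toRd z +ᵥ A) ≤ m (τ z ω) A
  aestronglyMeasurable : ∀ A, Bornology.IsBounded A → AEStronglyMeasurable (fun ω => m ω A) P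
  cost_nonneg : ∀ ω, 0 ≤ h ω
  integrable_cost : Integrable h P

namespace IsStationarySubadditive

variable {P : Measure Ω} {τ : Zd d → Ω → Ω} {m : Ω → Set (Rd d) → ℝ} {h : Ω → ℝ}

lemma le_sum (H : IsStationarySubadditive P τ m h) (ω : Ω) {A : Set (Rd d)} {U : Finset (Zd d)}
    (hA : Bornology.IsBounded A) (hU : ∀ z, toRd z ∈ A → z ∈ U) :
    m ω A ≤ ∑ z ∈ U, h (τ z ω) := by
  simpa [H.empty] using
    H.le_add_sum ω ∅ A U hA (Set.empty_subset A) fun z hz => hU z hz.1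

lemma integrable (H : IsStationarySubadditive P τ m h) (hτ : IsMeasurePreservingAction P τ)
    {A : Set (Rd d)} (hA : Bornology.IsBounded A) : Integrable (fun ω => m ω A) P := by
  refine (hτ.integrable_sum H.integrable_cost (finite_setOf_toRd_mem hA).toFinset).mono'
    (H.aestronglyMeasurable A hA) (ae_of_all _ fun ω => ?_)
  rw [Real.norm_of_nonneg (H.nonneg ω A)]
  exact H.le_sum ω hA fun z hz => by simpa using hz

lemma biUnion_le (H : IsStationarySubadditive P τ m h) (ω : Ω) {ι : Type*} {s : Finset ι}
    {A : ι → Set (Rd d)} (hA : ∀ i ∈ s, Bornology.IsBounded (A i))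
    (hdisj : (s : Set ι).PairwiseDisjoint A) : m ω (⋃ i ∈ s, A i) ≤ ∑ i ∈ s, m ω (A i) := by
  induction s using Finset.induction_on with
  | empty => simp [H.empty]
  | insert i s hi ih =>
    rw [Finset.coe_insert] at hdisj
    rw [Finset.set_biUnion_insert, Finset.sum_insert hi]
    have hAs : ∀ j ∈ s, Bornology.IsBounded (A j) := fun j hj => hA j (Finset.mem_insert_of_mem hj)
    have hunion : Disjoint (A i) (⋃ j ∈ s, A j) := by
      simp only [Set.disjoint_iUnion_right]
      exact fun j hj => hdisj (by simp) (by simp [hj]) (ne_of_mem_of_not_mem hj hi).symm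
    calc m ω (A i ∪ ⋃ j ∈ s, A j)
        ≤ m ω (A i) + m ω (⋃ j ∈ s, A j) := H.union_le ω _ _ (hA i (by simp))
          ((Bornology.isBounded_biUnion_finset s).2 hAs) hunion
      _ ≤ m ω (A i) + ∑ j ∈ s, m ω (A j) := by
          gcongr
          exact ih hAs (hdisj.subset (Set.subset_insert _ _))

lemma le_add_sum_residue_cells (H : IsStationarySubadditive P τ m h) (ω : Ω) {k : ℕ} (hk : 0 < k)
    {A B : Set (Rd d)} (hAB : A ⊆ B) (hB : Bornology.IsBounded B) {T U : Finset (Zd d)}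
    (hT : ∀ x ∈ T, toRd x +ᵥ cube d k ⊆ B \ A)
    (hU : ∀ z, toRd z ∈ B \ A → z ∉ U → ∀ x, toRd z ∈ toRd x +ᵥ cube d k → x ∈ T) (y : Zd d) :
    m ω B ≤ m ω A + ∑ x ∈ T with (∀ i, x i % k = y i % k), m (τ x ω) (cube d k) +
      ∑ z ∈ U, h (τ z ω) := by
  set S := T.filter fun x => ∀ i, x i % k = y i % k
  set C := ⋃ x ∈ S, (toRd x +ᵥ cube d k)
  have hCsub : C ⊆ B \ A := Set.iUnion₂_subset fun x hx => hT x (Finset.mem_filter.1 hx).1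
  have hCB : C ⊆ B := hCsub.trans Set.sdiff_subset
  have hcells : m ω C ≤ ∑ x ∈ S, m (τ x ω) (cube d k) := by
    refine (H.biUnion_le ω (fun x _ => (isBounded_cube k).vadd _) ?_).trans
      (Finset.sum_le_sum fun x _ => H.vadd_le ω x _)
    intro x hx x' hx' hne
    refine disjoint_toRd_vadd_cube (fun i => ?_) hne
    exact ((Finset.mem_filter.1 hx).2 i).trans ((Finset.mem_filter.1 hx').2 i).symm
  have hcover : ∀ z, toRd z ∈ B \ (A ∪ C) → z ∈ U := by
    intro z hz
    by_contra hzU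
    obtain ⟨x, hxy, hzx⟩ := exists_toRd_mem_vadd_cube hk y z
    have hxT := hU z ⟨hz.1, fun hzA => hz.2 (Or.inl hzA)⟩ hzU x hzx
    exact hz.2 (Or.inr (Set.mem_biUnion (Finset.mem_filter.2 ⟨hxT, hxy⟩) hzx))
  have hunion := H.union_le ω A C (hB.subset hAB) (hB.subset hCB)
    (Set.disjoint_left.2 fun p hpA hpC => (hCsub hpC).2 hpA)
  linarith [H.le_add_sum ω (A ∪ C) B U hB (Set.union_subset hAB hCB) hcover]

-- Summing over all residue classes counts each cell exactly once.
lemma le_add_average_cells (H : IsStationarySubadditive P τ m h) (ω : Ω) {k : ℕ} (hk : 0 < k)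
    {A B : Set (Rd d)} (hAB : A ⊆ B) (hB : Bornology.IsBounded B) {T U : Finset (Zd d)}
    (hT : ∀ x ∈ T, toRd x +ᵥ cube d k ⊆ B \ A)
    (hU : ∀ z, toRd z ∈ B \ A → z ∉ U → ∀ x, toRd z ∈ toRd x +ᵥ cube d k → x ∈ T) :
    m ω B ≤ m ω A + ((k : ℝ) ^ d)⁻¹ * ∑ x ∈ T, m (τ x ω) (cube d k) + ∑ z ∈ U, h (τ z ω) := by
  set O : Finset (Zd d) := Finset.Icc (fun _ => 0) (fun _ => (k : ℤ) - 1) with hO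
  have hk' : (0 : ℤ) < k := by exact_mod_cast hk
  have hcard : O.card = k ^ d := by simp [hO, Pi.card_Icc]
  have hfiber : ∑ y ∈ O, ∑ x ∈ T with (∀ i, x i % k = y i % k), m (τ x ω) (cube d k) =
      ∑ x ∈ T, m (τ x ω) (cube d k) := by
    rw [← Finset.sum_fiberwise_of_maps_to (s := T) (t := O) (g := fun x i => x i % (k : ℤ))]
    · refine Finset.sum_congr rfl fun y hy => Finset.sum_congr (Finset.filter_congr fun x _ => ?_)
        fun _ _ => rfl
      have hy := Finset.mem_Icc.1 hy
      rw [funext_iff]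
      exact forall_congr' fun i => by
        rw [Int.emod_eq_of_lt (hy.1 i) (by have := hy.2 i; simp only at this; lia)]
    · intro x _
      exact Finset.mem_Icc.2 ⟨fun i => Int.emod_nonneg _ hk'.ne', fun i =>
        Int.le_sub_one_of_lt (Int.emod_lt_of_pos _ hk')⟩
  have hsum := Finset.sum_le_sum fun y (_ : y ∈ O) =>
    H.le_add_sum_residue_cells ω hk hAB hB hT hU y
  rw [Finset.sum_add_distrib, Finset.sum_add_distrib, hfiber, Finset.sum_const, Finset.sum_const,
    Finset.sum_const, hcard] at hsum
  simp only [nsmul_eq_mul, Nat.cast_pow] at hsum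
  rw [← mul_le_mul_iff_right₀ (show (0 : ℝ) < (k : ℝ) ^ d by positivity)]
  calc _ ≤ _ := hsum
    _ = _ := by field_simp

end IsStationarySubadditive

lemma latticeBox_subset_latticeBox {a a' b b' : Fin d → ℝ} {t : ℝ} (ht : 0 ≤ t)
    (ha : ∀ i, a i ≤ a' i) (hb : ∀ i, b' i ≤ b i) : latticeBox a' b' t ⊆ latticeBox a b t := by
  intro z hz
  rw [mem_latticeBox] at hz ⊢
  exact fun i => ⟨(mul_le_mul_of_nonneg_left (ha i) ht).trans (hz i).1,
    (hz i).2.trans (mul_le_mul_of_nonneg_left (hb i) ht)⟩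

lemma BoxAveragesConverge.sdiff {P : Measure Ω} {τ : Zd d → Ω → Ω} {f : Ω → ℝ} {ω : Ω}
    (hf : BoxAveragesConverge P τ f ω) {a a' b b' : Fin d → ℝ} (ha : ∀ i, a i ≤ a' i)
    (hab' : ∀ i, a' i ≤ b' i) (hb : ∀ i, b' i ≤ b i) :
    Tendsto (fun t => (t ^ d)⁻¹ * ∑ z ∈ latticeBox a b t \ latticeBox a' b' t, f (τ z ω)) atTop
      (𝓝 ((∏ i, (b i - a i) - ∏ i, (b' i - a' i)) * ∫ ω, f ω ∂P)) := by
  rw [sub_mul]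
  refine ((hf a b fun i => (ha i).trans ((hab' i).trans (hb i))).sub (hf a' b' hab')).congr' ?_
  filter_upwards [eventually_ge_atTop 0] with t ht
  rw [Finset.sum_sdiff_eq_sub (latticeBox_subset_latticeBox ht ha hb), mul_sub]

lemma toRd_vadd_cube_subset_sdiff {a a' b b' : Fin d → ℝ} {k : ℕ} {η t : ℝ} (hkt : k ≤ t * η)
    {B : Set (Rd d)} (hB : openBox (fun i => t * a i) (fun i => t * b i) ⊆ B) {x z : Zd d}
    (hz : z ∈ latticeBox (fun i => a i + η) (fun i => b i - η) t)
    (hz' : z ∉ latticeBox (fun i => a' i - η) (fun i => b' i + η) t)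
    (hzx : toRd z ∈ toRd x +ᵥ cube d k) :
    toRd x +ᵥ cube d k ⊆ B \ closedBox (fun i => t * a' i) fun i => t * b' i := by
  intro p hpx
  rw [mem_toRd_vadd_cube] at hzx hpx
  have hclose : ∀ i, p i < z i + t * η ∧ z i < p i + t * η := fun i => by
    have hzi := hzx i
    have hpi := hpx i
    rw [toRd_apply] at hzi
    constructor <;> linarith
  rw [mem_latticeBox] at hz hz'
  refine ⟨hB fun i => ?_, fun hpA => hz' fun i => ?_⟩
  · have hzi := hz i
    constructor <;> linarith [hclose i, mul_add t (a i) η, mul_sub t (b i) η]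
  · have hpi := hpA i
    constructor <;> linarith [hclose i, mul_sub t (a' i) η, mul_add t (b' i) η]

/-- The mean of the process on the cube `[0,k)^d` per unit volume. -/
def meanDensity (P : Measure Ω) (m : Ω → Set (Rd d) → ℝ) (k : ℕ) : ℝ :=
  ((k : ℝ) ^ d)⁻¹ * ∫ ω, m ω (cube d k) ∂P

/-- The infimum over cubes of the mean density of a subadditive process, which is its limiting
density. -/
def limitDensity (P : Measure Ω) (m : Ω → Set (Rd d) → ℝ) : ℝ :=
  ⨅ k : {k : ℕ // 0 < k}, meanDensity P m k

/-- The realizations `ω` for which the ergodic theorem holds for the cost `h` and for the process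
on every cube `[0,k)^d`. -/
def IsTypical (P : Measure Ω) (τ : Zd d → Ω → Ω) (m : Ω → Set (Rd d) → ℝ) (h : Ω → ℝ)
    (ω : Ω) : Prop :=
  BoxAveragesConverge P τ h ω ∧ ∀ k, BoxAveragesConverge P τ (fun ω => m ω (cube d k)) ω

namespace IsStationarySubadditive

variable {P : Measure Ω} {τ : Zd d → Ω → Ω} {m : Ω → Set (Rd d) → ℝ} {h : Ω → ℝ}

lemma ae_isTypical [IsProbabilityMeasure P] (H : IsStationarySubadditive P τ m h)
    (hτ : IsErgodicAction P τ) : ∀ᵐ ω ∂P, IsTypical P τ m h ω :=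
  (hτ.ae_boxAveragesConverge H.integrable_cost).and <| ae_all_iff.2 fun k =>
    hτ.ae_boxAveragesConverge (H.integrable hτ.toIsMeasurePreservingAction (isBounded_cube k))

lemma meanDensity_nonneg (H : IsStationarySubadditive P τ m h) (k : ℕ) : 0 ≤ meanDensity P m k :=
  mul_nonneg (by positivity) (integral_nonneg fun ω => H.nonneg ω _)

lemma limitDensity_le (H : IsStationarySubadditive P τ m h) {k : ℕ} (hk : 0 < k) :
    limitDensity P m ≤ meanDensity P m k :=
  ciInf_le (f := fun k : {k : ℕ // 0 < k} => meanDensity P m k)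
    ⟨0, by rintro _ ⟨k, rfl⟩; exact H.meanDensity_nonneg k⟩ ⟨k, hk⟩

lemma limitDensity_nonneg (H : IsStationarySubadditive P τ m h) : 0 ≤ limitDensity P m :=
  Real.iInf_nonneg fun k => H.meanDensity_nonneg k

lemma le_add_sum_annulus (H : IsStationarySubadditive P τ m h) (ω : Ω) {k : ℕ} (hk : 0 < k)
    {a a' b b' : Fin d → ℝ} (ha : ∀ i, a i < a' i) (hb : ∀ i, b' i < b i) {η t : ℝ} (ht : 0 < t)
    (hkt : k ≤ t * η) {B : Set (Rd d)}
    (hBl : openBox (fun i => t * a i) (fun i => t * b i) ⊆ B)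
    (hBu : B ⊆ closedBox (fun i => t * (a i - η)) (fun i => t * (b i + η))) :
    m ω B ≤ m ω (closedBox (fun i => t * a' i) fun i => t * b' i) + (((k : ℝ) ^ d)⁻¹ *
      ∑ x ∈ latticeBox (fun i => a i - η) (fun i => b i + η) t \ latticeBox a' b' t,
        m (τ x ω) (cube d k) +
      (∑ z ∈ latticeBox (fun i => a i - η) (fun i => b i + η) t \
          latticeBox (fun i => a i + η) (fun i => b i - η) t, h (τ z ω) +
        ∑ z ∈ latticeBox (fun i => a' i - η) (fun i => b' i + η) t \ latticeBox a' b' t,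
          h (τ z ω))) := by
  set A := closedBox (fun i => t * a' i) fun i => t * b' i
  set L := latticeBox (fun i => a i - η) (fun i => b i + η) t
  set U₁ := L \ latticeBox (fun i => a i + η) (fun i => b i - η) t
  set U₂ := latticeBox (fun i => a' i - η) (fun i => b' i + η) t \ latticeBox a' b' t
  have hAB : A ⊆ B := fun p hp => hBl fun i =>
    ⟨((mul_lt_mul_iff_right₀ ht).2 (ha i)).trans_le (hp i).1,
      (hp i).2.trans_lt ((mul_lt_mul_iff_right₀ ht).2 (hb i))⟩
  have hL : ∀ z, toRd z ∈ B \ A → z ∈ L \ latticeBox a' b' t := fun z hz =>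
    Finset.mem_sdiff.2 ⟨mem_latticeBox.2 (hBu hz.1), fun hzA => hz.2 (mem_latticeBox.1 hzA)⟩
  have hcell : ∀ z, toRd z ∈ B \ A → z ∉ U₁ ∪ U₂ → ∀ x : Zd d, toRd z ∈ toRd x +ᵥ cube d k →
      toRd x +ᵥ cube d k ⊆ B \ A := by
    intro z hz hzU x hzx
    have hzL := Finset.mem_sdiff.1 (hL z hz)
    simp only [U₁, U₂, Finset.mem_union, Finset.mem_sdiff, not_or, not_and_not_right] at hzU
    exact toRd_vadd_cube_subset_sdiff hkt hBl (hzU.1 hzL.1) (fun hz' => hzL.2 (hzU.2 hz')) hzx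
  have hself : ∀ x : Zd d, toRd x ∈ toRd x +ᵥ cube d k := fun x => by simp [mem_toRd_vadd_cube, hk]
  have hcover := H.le_add_average_cells ω hk hAB ((isBounded_closedBox _ _).subset hBu)
    (T := (L \ latticeBox a' b' t).filter fun x => toRd x +ᵥ cube d k ⊆ B \ A) (U := U₁ ∪ U₂)
    (fun x hx => (Finset.mem_filter.1 hx).2) fun z hz hzU x hzx =>
      have hx := hcell z hz hzU x hzx
      Finset.mem_filter.2 ⟨hL x (hx (hself x)), hx⟩
  have hcells : ∑ x ∈ L \ latticeBox a' b' t with toRd x +ᵥ cube d k ⊆ B \ A,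
      m (τ x ω) (cube d k) ≤ ∑ x ∈ L \ latticeBox a' b' t, m (τ x ω) (cube d k) :=
    Finset.sum_le_sum_of_subset_of_nonneg (Finset.filter_subset _ _) fun _ _ _ => H.nonneg _ _
  have hcost := Finset.sum_union_inter (s₁ := U₁) (s₂ := U₂) (f := fun z => h (τ z ω))
  have hinter := Finset.sum_nonneg fun z (_ : z ∈ U₁ ∩ U₂) => H.cost_nonneg (τ z ω)
  have hscaled := mul_le_mul_of_nonneg_left hcells (show 0 ≤ ((k : ℝ) ^ d)⁻¹ by positivity)
  linarith

lemma exists_meanDensity_lt (ε : ℝ) (hε : 0 < ε) :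
    ∃ k : ℕ, 0 < k ∧ meanDensity P m k < limitDensity P m + ε := by
  have : Nonempty {k : ℕ // 0 < k} := ⟨⟨1, one_pos⟩⟩
  obtain ⟨k, hk⟩ := exists_lt_of_ciInf_lt (lt_add_of_pos_right (limitDensity P m) hε)
  exact ⟨k, k.2, hk⟩

-- As `η → 0` the cost of the two boundary layers of width `η` vanishes.
lemma exists_thin_annulus {a a' b b' : Fin d → ℝ} (ha : ∀ i, a i < a' i)
    (hab' : ∀ i, a' i ≤ b' i) (hb : ∀ i, b' i < b i) (c M : ℝ) {ε : ℝ} (hε : 0 < ε) :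
    ∃ η > 0, (∀ i, a i + η ≤ b i - η) ∧
      (∏ i, (b i + η - (a i - η)) - ∏ i, (b' i - a' i)) * M +
        ((∏ i, (b i + η - (a i - η)) - ∏ i, (b i - η - (a i + η))) * c +
          (∏ i, (b' i + η - (a' i - η)) - ∏ i, (b' i - a' i)) * c) <
      (∏ i, (b i - a i) - ∏ i, (b' i - a' i)) * M + ε := by
  have hsmall : ∀ᶠ η : ℝ in 𝓝 0, ∀ i, a i + η ≤ b i - η := eventually_all.2 fun i => by
    filter_upwards [eventually_lt_nhds (show 0 < (b i - a i) / 2 by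
      linarith [ha i, hab' i, hb i])] with η hη
    linarith
  have hlim : Tendsto (fun η : ℝ => (∏ i, (b i + η - (a i - η)) - ∏ i, (b' i - a' i)) * M +
        ((∏ i, (b i + η - (a i - η)) - ∏ i, (b i - η - (a i + η))) * c +
          (∏ i, (b' i + η - (a' i - η)) - ∏ i, (b' i - a' i)) * c)) (𝓝 0)
      (𝓝 ((∏ i, (b i - a i) - ∏ i, (b' i - a' i)) * M)) :=
    Continuous.tendsto' (by fun_prop) _ _ (by simp)
  obtain ⟨η, ⟨hsmall, hlt⟩, hη⟩ := (((hsmall.and (hlim.eventually (gt_mem_nhds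
    (lt_add_of_pos_right _ hε)))).filter_mono nhdsWithin_le_nhds).and
    (eventually_mem_nhdsWithin (s := Ioi 0))).exists
  exact ⟨η, hη, hsmall, hlt⟩

lemma exists_eventually_le_add_annulus (H : IsStationarySubadditive P τ m h) {ω : Ω}
    (hω : IsTypical P τ m h ω) {a a' b b' : Fin d → ℝ} (ha : ∀ i, a i < a' i)
    (hab' : ∀ i, a' i ≤ b' i) (hb : ∀ i, b' i < b i) {ε : ℝ} (hε : 0 < ε) :
    ∃ η > 0, ∀ᶠ t : ℝ in atTop, ∀ B : Set (Rd d),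
      openBox (fun i => t * a i) (fun i => t * b i) ⊆ B →
      B ⊆ closedBox (fun i => t * (a i - η)) (fun i => t * (b i + η)) →
      m ω B ≤ m ω (closedBox (fun i => t * a' i) fun i => t * b' i) +
        t ^ d * ((∏ i, (b i - a i) - ∏ i, (b' i - a' i)) * limitDensity P m + ε) := by
  have hvol : ∏ i, (b' i - a' i) ≤ ∏ i, (b i - a i) :=
    Finset.prod_le_prod (fun i _ => sub_nonneg.2 (hab' i)) fun i _ => by linarith [ha i, hb i]
  set v := ∏ i, (b i - a i) - ∏ i, (b' i - a' i)
  have : 0 ≤ v := sub_nonneg.2 hvol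
  obtain ⟨k, hk, hkW⟩ := exists_meanDensity_lt (P := P) (m := m) (ε / 2 / (v + 1)) (by positivity)
  obtain ⟨η, hη, hab, hlt⟩ := exists_thin_annulus ha hab' hb (∫ ω, h ω ∂P) (meanDensity P m k)
    (half_pos hε)
  have hdensity : v * meanDensity P m k ≤ v * limitDensity P m + ε / 2 := by
    calc v * meanDensity P m k ≤ v * (limitDensity P m + ε / 2 / (v + 1)) := by gcongr
      _ = v * limitDensity P m + v / (v + 1) * (ε / 2) := by ring
      _ ≤ v * limitDensity P m + 1 * (ε / 2) := by
          gcongr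
          exact div_le_one_of_le₀ (by linarith) (by linarith)
      _ = _ := by rw [one_mul]
  have hcells := ((hω.2 k).sdiff (fun i => (by linarith [ha i] : a i - η ≤ a' i)) hab'
    fun i => (by linarith [hb i] : b' i ≤ b i + η)).const_mul ((k : ℝ) ^ d)⁻¹
  have houter := hω.1.sdiff (fun i => (by linarith : a i - η ≤ a i + η)) hab
    fun i => (by linarith : b i - η ≤ b i + η)
  have hinner := hω.1.sdiff (fun i => (by linarith : a' i - η ≤ a' i)) hab'
    fun i => (by linarith : b' i ≤ b' i + η)
  rw [mul_left_comm] at hcells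
  refine ⟨η, hη, ?_⟩
  filter_upwards [(hcells.add (houter.add hinner)).eventually (gt_mem_nhds hlt),
    eventually_gt_atTop 0, eventually_ge_atTop (k / η)] with t hcost ht hkt B hBl hBu
  refine (H.le_add_sum_annulus ω hk ha hb ht ((div_le_iff₀ hη).1 hkt) hBl hBu).trans ?_
  gcongr
  have htd : 0 < t ^ d := by positivity
  rw [← inv_mul_le_iff₀ htd, mul_add, mul_add, mul_left_comm]
  linarith

end IsStationarySubadditive

lemma closedBox_subset_closedBox {a a' b b' : Fin d → ℝ} (ha : ∀ i, a i ≤ a' i)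
    (hb : ∀ i, b' i ≤ b i) : closedBox a' b' ⊆ closedBox a b :=
  fun _ hx i => ⟨(ha i).trans (hx i).1, (hx i).2.trans (hb i)⟩

-- Pratt's device: `max (g - (S N - u N)) 0` is dominated by `|g|`.
lemma tendsto_integral_zero_of_le {X : Type*} [MeasurableSpace X] {μ : Measure X}
    {u S : ℕ → X → ℝ} {g : X → ℝ} (hu : ∀ N, Integrable (u N) μ) (hS : ∀ N, Integrable (S N) μ)
    (hg : Integrable g μ) (hu_nonneg : ∀ N x, 0 ≤ u N x) (huS : ∀ N x, u N x ≤ S N x)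
    (hu_lim : ∀ᵐ x ∂μ, Tendsto (fun N => u N x) atTop (𝓝 0))
    (hS_lim : ∀ᵐ x ∂μ, Tendsto (fun N => S N x) atTop (𝓝 (g x)))
    (hS_int : Tendsto (fun N => ∫ x, S N x ∂μ) atTop (𝓝 (∫ x, g x ∂μ))) :
    Tendsto (fun N => ∫ x, u N x ∂μ) atTop (𝓝 0) := by
  set w : ℕ → X → ℝ := fun N x => max (g x - (S N x - u N x)) 0
  have hw : ∀ N, Integrable (w N) μ := fun N => (hg.sub ((hS N).sub (hu N))).pos_part
  have hw_lim : Tendsto (fun N => ∫ x, w N x ∂μ) atTop (𝓝 0) := by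
    rw [← integral_zero X ℝ (μ := μ)]
    refine tendsto_integral_of_dominated_convergence (fun x => |g x|)
      (fun N => (hw N).aestronglyMeasurable) hg.abs (fun N => ae_of_all _ fun x => ?_) ?_
    · rw [Real.norm_of_nonneg (le_max_right _ _)]
      exact max_le (by linarith [huS N x, le_abs_self (g x)]) (abs_nonneg _)
    · filter_upwards [hu_lim, hS_lim] with x hux hSx
      simpa using ((hSx.sub hux).const_sub (g x)).max (tendsto_const_nhds (x := (0 : ℝ)))
  have hbound : Tendsto (fun N => ∫ x, S N x ∂μ - ∫ x, g x ∂μ + ∫ x, w N x ∂μ) atTop (𝓝 0) := by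
    simpa using (hS_int.sub_const (∫ x, g x ∂μ)).add hw_lim
  refine squeeze_zero (fun N => integral_nonneg (hu_nonneg N)) (fun N => ?_) hbound
  rw [← integral_sub' (hS N) hg, ← integral_add' ((hS N).sub hg) (hw N)]
  refine integral_mono (hu N) (((hS N).sub hg).add (hw N)) fun x => ?_
  have := le_max_left (g x - (S N x - u N x)) 0
  simp only [Pi.add_apply, Pi.sub_apply, w]
  linarith

/-- The positive part of the excess of the density of the process on `[0,k)^d` over the limiting
density. -/
def densityExcess (P : Measure Ω) (m : Ω → Set (Rd d) → ℝ) (k : ℕ) (ω : Ω) : ℝ :=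
  max (((k : ℝ) ^ d)⁻¹ * m ω (cube d k) - limitDensity P m) 0

namespace IsStationarySubadditive

variable {P : Measure Ω} {τ : Zd d → Ω → Ω} {m : Ω → Set (Rd d) → ℝ} {h : Ω → ℝ}

-- The inner box of the annulus degenerates to a point.
lemma eventually_le_mul_limitDensity [NeZero d] (H : IsStationarySubadditive P τ m h) {ω : Ω}
    (hω : IsTypical P τ m h ω) {a b : Fin d → ℝ} (hab : ∀ i, a i < b i) {ε : ℝ} (hε : 0 < ε) :
    ∀ᶠ t : ℝ in atTop, ∀ B : Set (Rd d),
      openBox (fun i => t * a i) (fun i => t * b i) ⊆ B →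
      B ⊆ closedBox (fun i => t * a i) (fun i => t * b i) →
      m ω B ≤ t ^ d * ((∏ i, (b i - a i)) * limitDensity P m + ε) := by
  set c : Fin d → ℝ := fun i => (a i + b i) / 2
  have hvol : ∏ i, (c i - c i) = 0 := Finset.prod_eq_zero (Finset.mem_univ 0) (sub_self _)
  obtain ⟨η, hη, hannulus⟩ := H.exists_eventually_le_add_annulus hω (a' := c) (b' := c)
    (fun i => left_lt_add_div_two.2 (hab i)) (fun _ => le_rfl)
    (fun i => add_div_two_lt_right.2 (hab i)) (half_pos hε)
  have hpoint := hω.1 c c fun _ => le_rfl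
  rw [hvol, zero_mul] at hpoint
  filter_upwards [hannulus, hpoint.eventually (gt_mem_nhds (half_pos hε)),
    eventually_gt_atTop 0] with t ht hsum htpos B hBl hBu
  have hcost := H.le_sum ω (isBounded_closedBox (fun i => t * c i) fun i => t * c i)
    (U := latticeBox c c t) fun z hz => mem_latticeBox.2 hz
  rw [inv_mul_lt_iff₀ (by positivity)] at hsum
  have hB := ht B hBl (hBu.trans (closedBox_subset_closedBox (fun i => by gcongr; linarith)
    fun i => by gcongr; linarith))
  rw [hvol, sub_zero] at hB
  linarith

lemma integrable_densityExcess [IsFiniteMeasure P] (H : IsStationarySubadditive P τ m h)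
    (hτ : IsMeasurePreservingAction P τ) (k : ℕ) : Integrable (densityExcess P m k) P :=
  (((H.integrable hτ (isBounded_cube k)).const_mul _).sub (integrable_const _)).pos_part

lemma meanDensity_le_add_integral_densityExcess [IsProbabilityMeasure P]
    (H : IsStationarySubadditive P τ m h) (hτ : IsMeasurePreservingAction P τ) (k : ℕ) :
    meanDensity P m k ≤ limitDensity P m + ∫ ω, densityExcess P m k ω ∂P := by
  have hm := (H.integrable hτ (isBounded_cube k)).const_mul ((k : ℝ) ^ d)⁻¹
  have hle := integral_mono (hm.sub (integrable_const (limitDensity P m)))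
    (H.integrable_densityExcess hτ k) fun ω => le_max_left _ _
  rw [integral_sub' hm (integrable_const _), integral_const_mul, integral_const, probReal_univ,
    one_smul] at hle
  rw [meanDensity]
  linarith

lemma densityExcess_le_average_cost (H : IsStationarySubadditive P τ m h) (N : ℕ) (ω : Ω) :
    densityExcess P m N ω ≤ ((N : ℝ) ^ d)⁻¹ * ∑ z ∈ latticeBox 0 1 N, h (τ z ω) := by
  have hcost : m ω (cube d N) ≤ ∑ z ∈ latticeBox 0 1 N, h (τ z ω) :=
    H.le_sum ω (isBounded_cube N) fun z hz => mem_latticeBox.2 fun i => by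
      simpa using And.imp_right le_of_lt (hz i)
  have hscaled := mul_le_mul_of_nonneg_left hcost (show 0 ≤ ((N : ℝ) ^ d)⁻¹ by positivity)
  exact max_le (by linarith [H.limitDensity_nonneg])
    (mul_nonneg (by positivity) (Finset.sum_nonneg fun z _ => H.cost_nonneg _))

lemma tendsto_densityExcess [NeZero d] (H : IsStationarySubadditive P τ m h) {ω : Ω}
    (hω : IsTypical P τ m h ω) : Tendsto (fun N => densityExcess P m N ω) atTop (𝓝 0) := by
  refine Metric.tendsto_atTop.2 fun ε hε => eventually_atTop.1 ?_
  have hupper := tendsto_natCast_atTop_atTop (R := ℝ) |>.eventually <|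
    H.eventually_le_mul_limitDensity hω (a := 0) (b := 1) (fun _ => one_pos) (half_pos hε)
  filter_upwards [hupper, eventually_gt_atTop 0] with N hN hNpos
  have hle := hN (cube d N) (fun x hx i => by simpa using And.imp_left le_of_lt (hx i))
    fun x hx i => by simpa using And.imp_right le_of_lt (hx i)
  simp only [Pi.one_apply, Pi.zero_apply, sub_zero, Finset.prod_const_one, one_mul] at hle
  rw [← inv_mul_le_iff₀ (by positivity)] at hle
  rw [Real.dist_eq, sub_zero, densityExcess, abs_of_nonneg (le_max_right _ _)]
  exact max_lt (by linarith) hε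

lemma tendsto_integral_densityExcess [NeZero d] [IsProbabilityMeasure P]
    (H : IsStationarySubadditive P τ m h) (hτ : IsErgodicAction P τ) :
    Tendsto (fun N => ∫ ω, densityExcess P m N ω ∂P) atTop (𝓝 0) := by
  have hsum := hτ.integrable_sum H.integrable_cost
  have htypical := H.ae_isTypical hτ
  have hunit : ∏ i : Fin d, ((1 : Fin d → ℝ) i - (0 : Fin d → ℝ) i) = 1 := by simp
  refine tendsto_integral_zero_of_le
    (S := fun N ω => ((N : ℝ) ^ d)⁻¹ * ∑ z ∈ latticeBox 0 1 N, h (τ z ω))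
    (H.integrable_densityExcess hτ.toIsMeasurePreservingAction)
    (fun N => (hsum _).const_mul _) (integrable_const (∫ ω, h ω ∂P))
    (fun N ω => le_max_right _ _) H.densityExcess_le_average_cost
    (htypical.mono fun ω hω => H.tendsto_densityExcess hω) (htypical.mono fun ω hω => ?_) ?_
  · have hlim := (hω.1 0 1 fun _ => zero_le_one).comp (tendsto_natCast_atTop_atTop (R := ℝ))
    rwa [hunit, one_mul] at hlim
  · have hcard := ((tendsto_card_latticeBox (d := d) (a := 0) (b := 1) fun _ => zero_le_one).comp
      (tendsto_natCast_atTop_atTop (R := ℝ))).mul_const (∫ ω, h ω ∂P)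
    rw [hunit, one_mul] at hcard
    simp only [integral_const_mul, hτ.integral_sum H.integrable_cost, integral_const,
      probReal_univ, one_smul, ← mul_assoc]
    exact hcard

lemma tendsto_meanDensity [NeZero d] [IsProbabilityMeasure P]
    (H : IsStationarySubadditive P τ m h) (hτ : IsErgodicAction P τ) :
    Tendsto (meanDensity P m) atTop (𝓝 (limitDensity P m)) := by
  have hupper := (H.tendsto_integral_densityExcess hτ).const_add (limitDensity P m)
  rw [add_zero] at hupper
  refine tendsto_of_tendsto_of_tendsto_of_le_of_le' tendsto_const_nhds hupper ?_ ?_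
  · filter_upwards [eventually_gt_atTop 0] with N hN using H.limitDensity_le hN
  · exact Eventually.of_forall <|
      H.meanDensity_le_add_integral_densityExcess hτ.toIsMeasurePreservingAction

end IsStationarySubadditive

/-! ### A maximal inequality for subadditive processes -/

/-- The index `z` of the half-open cube `k z + [0,k)^d` containing `p`. -/
def cellIndex (k : ℕ) (p : Rd d) : Zd d := fun i => ⌊p i / k⌋

/-- The union of the cubes `k z + [0,k)^d`, `z ∈ E`. -/
def cellUnion (k : ℕ) (E : Finset (Zd d)) : Set (Rd d) := cellIndex k ⁻¹' E

lemma cast_nsmul_apply (k : ℕ) (z : Zd d) (i : Fin d) : (((k • z) i : ℤ) : ℝ) = k * z i := by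
  simp

lemma cellUnion_singleton {k : ℕ} (hk : 0 < k) (z : Zd d) :
    cellUnion k {z} = toRd (k • z) +ᵥ cube d k := by
  have hk' : (0 : ℝ) < k := by exact_mod_cast hk
  ext p
  simp only [cellUnion, Finset.coe_singleton, Set.mem_preimage, Set.mem_singleton_iff, funext_iff,
    cellIndex, Int.floor_eq_iff, le_div_iff₀ hk', div_lt_iff₀ hk', mem_toRd_vadd_cube,
    cast_nsmul_apply, add_one_mul, mul_comm (k : ℝ)]

lemma cellUnion_eq_biUnion {k : ℕ} (hk : 0 < k) (E : Finset (Zd d)) :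
    cellUnion k E = ⋃ z ∈ E, (toRd (k • z) +ᵥ cube d k) := by
  simp only [← cellUnion_singleton hk, cellUnion, Finset.coe_singleton]
  exact (Set.biUnion_preimage_singleton _ _).symm

lemma isBounded_cellUnion {k : ℕ} (hk : 0 < k) (E : Finset (Zd d)) :
    Bornology.IsBounded (cellUnion k E) := by
  rw [cellUnion_eq_biUnion hk]
  exact (Bornology.isBounded_biUnion_finset E).2 fun z _ => (isBounded_cube k).vadd _

lemma disjoint_cellUnion {k : ℕ} {E E' : Finset (Zd d)} (hE : Disjoint E E') :
    Disjoint (cellUnion k E) (cellUnion k E') :=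
  (Finset.disjoint_coe.2 hE).preimage _

lemma mem_cellUnion_latticeBall {k : ℕ} (hk : 0 < k) {z : Zd d} {r : ℕ} {p : Rd d} :
    p ∈ cellUnion k (latticeBall z r) ↔
      ∀ i, k * ((z i : ℝ) - r) ≤ p i ∧ p i < k * ((z i : ℝ) + r + 1) := by
  have hk' : (0 : ℝ) < k := by exact_mod_cast hk
  simp only [cellUnion, Set.mem_preimage, Finset.mem_coe, mem_latticeBall, cellIndex]
  refine forall_congr' fun i => ?_
  rw [Int.le_floor, ← Int.lt_add_one_iff, Int.floor_lt, le_div_iff₀ hk', div_lt_iff₀ hk']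
  push_cast
  rw [mul_comm, mul_comm (_ + _)]

lemma cellUnion_latticeBall_eq_vadd {k : ℕ} (hk : 0 < k) (z : Zd d) (r : ℕ) :
    cellUnion k (latticeBall z r) = toRd (k • z) +ᵥ cellUnion k (latticeBall 0 r) := by
  ext p
  rw [Set.mem_vadd_set_iff_neg_vadd_mem, mem_cellUnion_latticeBall hk,
    mem_cellUnion_latticeBall hk]
  simp only [vadd_eq_add, PiLp.add_apply, PiLp.neg_apply, toRd_apply, cast_nsmul_apply,
    Pi.zero_apply, Int.cast_zero]
  refine forall_congr' fun i => ?_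
  constructor <;> rintro ⟨hlo, hhi⟩ <;> constructor <;> linarith

lemma cube_eq_vadd_cellUnion {k : ℕ} (hk : 0 < k) (r : ℕ) :
    cube d (k * (2 * r + 1)) = toRd (fun _ => k * r : Zd d) +ᵥ cellUnion k (latticeBall 0 r) := by
  ext p
  rw [Set.mem_vadd_set_iff_neg_vadd_mem, mem_cellUnion_latticeBall hk]
  simp only [cube, Set.mem_ofPred_eq, vadd_eq_add, PiLp.add_apply, PiLp.neg_apply, toRd_apply,
    Pi.zero_apply, Int.cast_mul, Int.cast_natCast, Int.cast_zero, Nat.cast_mul, Nat.cast_add,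
    Nat.cast_one, Nat.cast_ofNat]
  refine forall_congr' fun i => ?_
  constructor <;> rintro ⟨hlo, hhi⟩ <;> constructor <;> linarith

/-- An upper bound for both `m_ω([0,k)^d)` and `k^d` times the limit density, whose mean exceeds
the latter by `k^d` times the mean density excess. -/
def cellMajorant (P : Measure Ω) (m : Ω → Set (Rd d) → ℝ) (k : ℕ) (ω : Ω) : ℝ :=
  (k : ℝ) ^ d * (limitDensity P m + densityExcess P m k ω)

/-- The excess of the sum of the cell majorants over the process on the centered block of
`(2 * r + 1) ^ d` cubes of side `k`. -/
def cellDeficit (P : Measure Ω) (τ : Zd d → Ω → Ω) (m : Ω → Set (Rd d) → ℝ) (k r : ℕ) (ω : Ω) :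
    ℝ :=
  ∑ z ∈ latticeBall 0 r, cellMajorant P m k (τ (k • z) ω) - m ω (cellUnion k (latticeBall 0 r))

lemma mul_limitDensity_le_cellMajorant {P : Measure Ω} {m : Ω → Set (Rd d) → ℝ} (k : ℕ) (ω : Ω) :
    (k : ℝ) ^ d * limitDensity P m ≤ cellMajorant P m k ω :=
  mul_le_mul_of_nonneg_left (le_add_of_nonneg_right (le_max_right _ _)) (by positivity)

lemma le_cellMajorant {P : Measure Ω} {m : Ω → Set (Rd d) → ℝ} {k : ℕ} (hk : 0 < k) (ω : Ω) :
    m ω (cube d k) ≤ cellMajorant P m k ω := by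
  rw [cellMajorant, ← inv_mul_le_iff₀ (by positivity), ← sub_le_iff_le_add']
  exact le_max_left _ _

namespace IsStationarySubadditive

variable {P : Measure Ω} {τ : Zd d → Ω → Ω} {m : Ω → Set (Rd d) → ℝ} {h : Ω → ℝ}

lemma cellUnion_le_sum (H : IsStationarySubadditive P τ m h) {k : ℕ} (hk : 0 < k) (ω : Ω)
    (E : Finset (Zd d)) :
    m ω (cellUnion k E) ≤ ∑ z ∈ E, m (τ (k • z) ω) (cube d k) := by
  have hdisj : (E : Set (Zd d)).PairwiseDisjoint fun z => toRd (k • z) +ᵥ cube d k := by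
    intro z _ z' _ hne
    simp only [Function.onFun, ← cellUnion_singleton hk]
    exact disjoint_cellUnion (Finset.disjoint_singleton.2 hne)
  rw [cellUnion_eq_biUnion hk]
  exact (H.biUnion_le ω (fun z _ => (isBounded_cube k).vadd _) hdisj).trans
    (Finset.sum_le_sum fun z _ => H.vadd_le ω _ _)

lemma cellUnion_biUnion_latticeBall_le_sum (H : IsStationarySubadditive P τ m h) {k : ℕ}
    (hk : 0 < k) (ω : Ω) {s : Finset (Zd d)} {r : Zd d → ℕ}
    (hdisj : (s : Set (Zd d)).PairwiseDisjoint fun z => latticeBall z (r z)) :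
    m ω (cellUnion k (s.biUnion fun z => latticeBall z (r z))) ≤
      ∑ z ∈ s, m (τ (k • z) ω) (cellUnion k (latticeBall 0 (r z))) := by
  have hunion : cellUnion k (s.biUnion fun z => latticeBall z (r z)) =
      ⋃ z ∈ s, cellUnion k (latticeBall z (r z)) := by
    simp only [cellUnion, Finset.coe_biUnion, Set.preimage_iUnion₂, Finset.mem_coe]
  rw [hunion]
  refine (H.biUnion_le ω (fun z _ => isBounded_cellUnion hk _) fun z hz z' hz' hne =>
    disjoint_cellUnion (hdisj hz hz' hne)).trans (Finset.sum_le_sum fun z _ => ?_)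
  rw [cellUnion_latticeBall_eq_vadd hk]
  exact H.vadd_le ω _ _

lemma limitDensity_mul_le_integral_cellUnion (H : IsStationarySubadditive P τ m h)
    (hτ : IsMeasurePreservingAction P τ) {k : ℕ} (hk : 0 < k) (r : ℕ) :
    limitDensity P m * ((k : ℝ) * (2 * r + 1)) ^ d ≤
      ∫ ω, m ω (cellUnion k (latticeBall 0 r)) ∂P := by
  have hint := H.integrable hτ (isBounded_cellUnion hk (latticeBall 0 r))
  have hdensity := H.limitDensity_le (k := k * (2 * r + 1)) (by positivity)
  rw [meanDensity, le_inv_mul_iff₀ (by positivity), mul_comm] at hdensity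
  push_cast at hdensity
  refine hdensity.trans ?_
  rw [← hτ.integral_comp (fun ω => m ω (cellUnion k (latticeBall 0 r))) fun _ => (k * r : ℤ)]
  refine integral_mono (H.integrable hτ (isBounded_cube _)) (hτ.integrable_comp hint _)
    fun ω => ?_
  simp only [cube_eq_vadd_cellUnion hk]
  exact H.vadd_le ω _ _

lemma isSuperadditiveOnBalls_cellDeficit (H : IsStationarySubadditive P τ m h)
    (hτ : IsMeasurePreservingAction P τ) {k : ℕ} (hk : 0 < k) :
    IsSuperadditiveOnBalls (fun z => τ (k • z)) fun r ω => cellDeficit P τ m k r ω := by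
  intro ω N s r hs hdisj
  set D := s.biUnion fun z => latticeBall z (r z)
  set g : Zd d → ℝ := fun w => cellMajorant P m k (τ (k • w) ω)
  have hD : D ⊆ latticeBall 0 N := Finset.biUnion_subset.2 hs
  have hmajorant : ∑ z ∈ s, ∑ w ∈ latticeBall 0 (r z), g (w + z) = ∑ w ∈ D, g w := by
    rw [Finset.sum_biUnion hdisj]
    exact Finset.sum_congr rfl fun z _ => sum_latticeBall_add _ _ _
  have hcover : m ω (cellUnion k (latticeBall 0 N)) ≤
      m ω (cellUnion k D) + m ω (cellUnion k (latticeBall 0 N \ D)) := by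
    have hsplit : cellUnion k (latticeBall 0 N) =
        cellUnion k D ∪ cellUnion k (latticeBall 0 N \ D) := by
      rw [cellUnion, cellUnion, cellUnion, ← Set.preimage_union, ← Finset.coe_union,
        Finset.union_sdiff_of_subset hD]
    rw [hsplit]
    exact H.union_le ω _ _ (isBounded_cellUnion hk _) (isBounded_cellUnion hk _)
      (disjoint_cellUnion Finset.disjoint_sdiff)
  have hballs := H.cellUnion_biUnion_latticeBall_le_sum hk ω hdisj
  have hrest : m ω (cellUnion k (latticeBall 0 N \ D)) ≤ ∑ w ∈ latticeBall 0 N \ D, g w :=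
    (H.cellUnion_le_sum hk ω _).trans (Finset.sum_le_sum fun w _ => le_cellMajorant hk _)
  have hsum := Finset.sum_sdiff (f := g) hD
  have hshift (z w : Zd d) : cellMajorant P m k (τ (k • w) (τ (k • z) ω)) = g (w + z) := by
    simp only [g, smul_add, hτ.add_apply]
  simp only [cellDeficit, hshift, Finset.sum_sub_distrib]
  linarith

lemma integrable_cellMajorant [IsFiniteMeasure P] (H : IsStationarySubadditive P τ m h)
    (hτ : IsMeasurePreservingAction P τ) (k : ℕ) : Integrable (cellMajorant P m k) P :=
  ((integrable_const _).add (H.integrable_densityExcess hτ k)).const_mul _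

lemma integrable_cellDeficit [IsFiniteMeasure P] (H : IsStationarySubadditive P τ m h)
    (hτ : IsMeasurePreservingAction P τ) {k : ℕ} (hk : 0 < k) (r : ℕ) :
    Integrable (cellDeficit P τ m k r) P :=
  ((hτ.smul k).integrable_sum (H.integrable_cellMajorant hτ k) _).sub
    (H.integrable hτ (isBounded_cellUnion hk _))

lemma integral_cellDeficit_le [IsProbabilityMeasure P] (H : IsStationarySubadditive P τ m h)
    (hτ : IsMeasurePreservingAction P τ) {k : ℕ} (hk : 0 < k) (r : ℕ) :
    ∫ ω, cellDeficit P τ m k r ω ∂P ≤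
      (k : ℝ) ^ d * (∫ ω, densityExcess P m k ω ∂P) * (2 * r + 1) ^ d := by
  have hmajorant := H.integrable_cellMajorant hτ k
  have hlower := H.limitDensity_mul_le_integral_cellUnion hτ hk r
  have hcell : ∫ ω, cellMajorant P m k ω ∂P =
      (k : ℝ) ^ d * (limitDensity P m + ∫ ω, densityExcess P m k ω ∂P) := by
    simp only [cellMajorant]
    rw [integral_const_mul, integral_add (integrable_const _) (H.integrable_densityExcess hτ k),
      integral_const, probReal_univ, one_smul]
  simp only [cellDeficit]
  rw [integral_sub ((hτ.smul k).integrable_sum hmajorant _)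
    (H.integrable hτ (isBounded_cellUnion hk _)), (hτ.smul k).integral_sum hmajorant, hcell,
    card_latticeBall]
  rw [mul_pow] at hlower
  push_cast
  linarith

theorem measure_limitDensity_sub_cellUnion_le [IsProbabilityMeasure P]
    (H : IsStationarySubadditive P τ m h) (hτ : IsMeasurePreservingAction P τ) {k : ℕ}
    (hk : 0 < k) {δ : ℝ} (hδ : 0 < δ) :
    P {ω | ∃ r : ℕ, δ * ((k : ℝ) * (2 * r + 1)) ^ d <
        limitDensity P m * ((k : ℝ) * (2 * r + 1)) ^ d - m ω (cellUnion k (latticeBall 0 r))} ≤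
      ENNReal.ofReal (5 ^ d * (∫ ω, densityExcess P m k ω ∂P) / δ) := by
  have hmaximal := (H.isSuperadditiveOnBalls_cellDeficit hτ hk).maximal_inequality (hτ.smul k)
    (H.integrable_cellDeficit hτ hk) (H.integral_cellDeficit_le hτ hk)
    (show 0 < δ * (k : ℝ) ^ d by positivity)
  have hconst : 5 ^ d * ((k : ℝ) ^ d * ∫ ω, densityExcess P m k ω ∂P) / (δ * (k : ℝ) ^ d) =
      5 ^ d * (∫ ω, densityExcess P m k ω ∂P) / δ := by
    field_simp
  rw [hconst] at hmaximal
  refine (measure_mono ?_).trans hmaximal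
  rintro ω ⟨r, hr⟩
  refine ⟨r, ?_⟩
  have hsum := Finset.card_nsmul_le_sum (latticeBall 0 r)
    (fun z => cellMajorant P m k (τ (k • z) ω)) _
    fun z _ => mul_limitDensity_le_cellMajorant k (τ (k • z) ω)
  rw [card_latticeBall, nsmul_eq_mul] at hsum
  push_cast at hsum
  rw [mul_pow] at hr
  rw [cellDeficit]
  linarith

theorem ae_exists_limitDensity_sub_cellUnion_le [NeZero d] [IsProbabilityMeasure P]
    (H : IsStationarySubadditive P τ m h) (hτ : IsErgodicAction P τ) :
    ∀ᵐ ω ∂P, ∀ δ > 0, ∃ k : ℕ, 0 < k ∧ ∀ r : ℕ,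
      limitDensity P m * ((k : ℝ) * (2 * r + 1)) ^ d - m ω (cellUnion k (latticeBall 0 r)) ≤
        δ * ((k : ℝ) * (2 * r + 1)) ^ d := by
  have hfixed (j : ℕ) : ∀ᵐ ω ∂P, ∃ k : ℕ, 0 < k ∧ ∀ r : ℕ,
      limitDensity P m * ((k : ℝ) * (2 * r + 1)) ^ d - m ω (cellUnion k (latticeBall 0 r)) ≤
        1 / ((j : ℝ) + 1) * ((k : ℝ) * (2 * r + 1)) ^ d := by
    have hbound : Tendsto (fun k : ℕ => ENNReal.ofReal
        (5 ^ d * (∫ ω, densityExcess P m k ω ∂P) / (1 / ((j : ℝ) + 1)))) atTop (𝓝 0) := by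
      simpa using ENNReal.tendsto_ofReal
        (((H.tendsto_integral_densityExcess hτ).const_mul (5 ^ d)).div_const (1 / ((j : ℝ) + 1)))
    refine ae_iff.2 (le_antisymm (ge_of_tendsto hbound ?_) zero_le)
    filter_upwards [eventually_gt_atTop 0] with k hk
    refine (measure_mono fun ω hω => ?_).trans
      (H.measure_limitDensity_sub_cellUnion_le hτ.toIsMeasurePreservingAction hk
        (Nat.one_div_pos_of_nat (n := j)))
    simp only [Set.mem_ofPred_eq, not_exists, not_and, not_forall, not_le] at hω
    exact hω k hk
  filter_upwards [ae_all_iff.2 hfixed] with ω hω δ hδ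
  obtain ⟨j, hj⟩ := exists_nat_one_div_lt hδ
  obtain ⟨k, hk, hr⟩ := hω j
  exact ⟨k, hk, fun r => (hr r).trans (by gcongr)⟩

end IsStationarySubadditive

lemma eventually_exists_cellUnion_between {k : ℕ} (hk : 0 < k) {M η : ℝ} (hM : 0 ≤ M)
    (hη : 0 < η) :
    ∀ᶠ t : ℝ in atTop, ∃ r : ℕ,
      openBox (fun _ => t * (-M)) (fun _ => t * M) ⊆ cellUnion k (latticeBall (0 : Zd d) r) ∧
      cellUnion k (latticeBall (0 : Zd d) r) ⊆
        closedBox (fun _ => t * (-M - η)) (fun _ => t * (M + η)) ∧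
      t * (2 * M) ≤ k * (2 * r + 1) ∧ (k : ℝ) * (2 * r + 1) ≤ t * (2 * (M + 1)) := by
  have hk' : (0 : ℝ) < k := by exact_mod_cast hk
  filter_upwards [eventually_ge_atTop (2 * k : ℝ), eventually_ge_atTop (2 * k / η)] with t ht htη
  have ht0 : 0 ≤ t := (by positivity : (0 : ℝ) ≤ 2 * k).trans ht
  rw [div_le_iff₀ hη] at htη
  have hlo : t * M ≤ k * ⌈t * M / k⌉₊ := (div_le_iff₀' hk').1 (Nat.le_ceil _)
  have hhi : (k : ℝ) * ⌈t * M / k⌉₊ ≤ t * M + k := by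
    have := mul_le_mul_of_nonneg_left
      (Nat.ceil_lt_add_one (div_nonneg (mul_nonneg ht0 hM) hk'.le)).le hk'.le
    rwa [mul_add, mul_one, mul_div_cancel₀ _ hk'.ne'] at this
  refine ⟨⌈t * M / k⌉₊, fun p hp => (mem_cellUnion_latticeBall hk).2 fun i => ?_,
    fun p hp i => ?_, by linarith, by linarith⟩
  · have := hp i
    simp only [Pi.zero_apply, Int.cast_zero]
    constructor <;> linarith
  · have := (mem_cellUnion_latticeBall hk).1 hp i
    simp only [Pi.zero_apply, Int.cast_zero] at this
    constructor <;> linarith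

lemma exists_forall_mem_Ioo_neg_self (a b : Fin d → ℝ) :
    ∃ M > 0, ∀ i, -M < a i ∧ b i < M := by
  refine ⟨‖a‖ + ‖b‖ + 1, by positivity, fun i => ?_⟩
  have ha := (neg_le_abs (a i)).trans (norm_le_pi_norm a i)
  have hb := (le_abs_self (b i)).trans (norm_le_pi_norm b i)
  constructor <;> linarith [norm_nonneg a, norm_nonneg b]

lemma smul_closedBox {t : ℝ} (ht : 0 < t) (a b : Fin d → ℝ) :
    t • closedBox a b = closedBox (fun i => t * a i) fun i => t * b i := by
  ext x
  rw [Set.mem_smul_set_iff_inv_smul_mem₀ ht.ne']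
  simp only [closedBox, Set.mem_ofPred_eq, PiLp.smul_apply, smul_eq_mul]
  refine forall_congr' fun i => ?_
  rw [inv_mul_le_iff₀ ht, le_inv_mul_iff₀ ht]

lemma toReal_volume_closedBox {a b : Fin d → ℝ} (hab : ∀ i, a i ≤ b i) :
    (volume (closedBox a b)).toReal = ∏ i, (b i - a i) := by
  have hpreimage :
      closedBox a b = (MeasurableEquiv.toLp 2 (Fin d → ℝ)).symm ⁻¹' Set.Icc a b := by
    ext x
    simp only [closedBox, Set.mem_ofPred_eq, Set.mem_preimage, Set.mem_Icc, Pi.le_def]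
    exact forall_and
  rw [hpreimage,
    (EuclideanSpace.volume_preserving_symm_measurableEquiv_toLp _).measure_preimage_equiv,
    Real.volume_Icc_pi_toReal hab]

lemma toReal_volume_smul_closedBox {t : ℝ} (ht : 0 < t) {a b : Fin d → ℝ} (hab : ∀ i, a i ≤ b i) :
    (volume (t • closedBox a b)).toReal = t ^ d * ∏ i, (b i - a i) := by
  rw [smul_closedBox ht, toReal_volume_closedBox fun i => by gcongr; exact hab i]
  simp only [← mul_sub, Finset.prod_mul_distrib, Finset.prod_const, Finset.card_univ,
    Fintype.card_fin]

namespace IsStationarySubadditive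

variable {P : Measure Ω} {τ : Zd d → Ω → Ω} {m : Ω → Set (Rd d) → ℝ} {h : Ω → ℝ}

-- The process on a large centered block is almost maximal, and the annulus between the box and
-- the block cannot contribute more than its volume times the limit density.
lemma eventually_mul_limitDensity_le (H : IsStationarySubadditive P τ m h) {ω : Ω}
    (hω : IsTypical P τ m h ω)
    (hblock : ∀ δ > 0, ∃ k : ℕ, 0 < k ∧ ∀ r : ℕ,
      limitDensity P m * ((k : ℝ) * (2 * r + 1)) ^ d - m ω (cellUnion k (latticeBall 0 r)) ≤
        δ * ((k : ℝ) * (2 * r + 1)) ^ d)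
    {a b : Fin d → ℝ} (hab : ∀ i, a i ≤ b i) {ε : ℝ} (hε : 0 < ε) :
    ∀ᶠ t : ℝ in atTop, t ^ d * ((∏ i, (b i - a i)) * limitDensity P m - ε) ≤
      m ω (closedBox (fun i => t * a i) fun i => t * b i) := by
  obtain ⟨M, hM, hMab⟩ := exists_forall_mem_Ioo_neg_self a b
  obtain ⟨η, hη, hannulus⟩ := H.exists_eventually_le_add_annulus hω (fun i => (hMab i).1) hab
    (fun i => (hMab i).2) (half_pos hε)
  obtain ⟨k, hk, hdeficit⟩ := hblock (ε / 2 / (2 * (M + 1)) ^ d) (by positivity)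
  filter_upwards [hannulus, eventually_exists_cellUnion_between (d := d) hk hM.le hη,
    eventually_ge_atTop 0] with t hannulus ⟨r, hinner, houter, hside_ge, hside_le⟩ ht
  have hupper := hannulus _ hinner houter
  have hvol : ∏ _i : Fin d, (M - -M) = (2 * M) ^ d := by
    rw [Finset.prod_const, Finset.card_univ, Fintype.card_fin, sub_neg_eq_add, two_mul]
  rw [hvol] at hupper
  have hmain : limitDensity P m * (t ^ d * (2 * M) ^ d) ≤
      limitDensity P m * ((k : ℝ) * (2 * r + 1)) ^ d := by
    rw [← mul_pow]
    exact mul_le_mul_of_nonneg_left (pow_le_pow_left₀ (by positivity) hside_ge d)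
      H.limitDensity_nonneg
  have herror : ε / 2 / (2 * (M + 1)) ^ d * ((k : ℝ) * (2 * r + 1)) ^ d ≤ t ^ d * (ε / 2) :=
    calc _ ≤ ε / 2 / (2 * (M + 1)) ^ d * (t * (2 * (M + 1))) ^ d := by gcongr
      _ = t ^ d * (ε / 2) := by
        rw [mul_pow t, mul_left_comm, div_mul_cancel₀ _ (by positivity)]
  linarith [hdeficit r]

theorem ae_tendsto_smul_closedBox [NeZero d] [IsProbabilityMeasure P]
    (H : IsStationarySubadditive P τ m h) (hτ : IsErgodicAction P τ) :
    ∀ᵐ ω ∂P, ∀ a b : Fin d → ℝ, (∀ i, a i < b i) →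
      Tendsto (fun t : ℝ => m ω (t • closedBox a b) / (volume (t • closedBox a b)).toReal) atTop
        (𝓝 (limitDensity P m)) := by
  filter_upwards [H.ae_isTypical hτ, H.ae_exists_limitDensity_sub_cellUnion_le hτ]
    with ω hω hblock a b hab
  have hv : 0 < ∏ i, (b i - a i) := Finset.prod_pos fun i _ => sub_pos.2 (hab i)
  refine Metric.tendsto_nhds.2 fun ε hε => ?_
  have hε' : 0 < ε / 2 * ∏ i, (b i - a i) := by positivity
  filter_upwards [H.eventually_le_mul_limitDensity hω hab hε',
    H.eventually_mul_limitDensity_le hω hblock (fun i => (hab i).le) hε',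
    eventually_gt_atTop 0] with t hupper hlower ht
  have htv : 0 < t ^ d * ∏ i, (b i - a i) := by positivity
  have hupper := hupper (closedBox _ _) (fun x hx i => ⟨(hx i).1.le, (hx i).2.le⟩) subset_rfl
  rw [toReal_volume_smul_closedBox ht fun i => (hab i).le, smul_closedBox ht, Real.dist_eq]
  refine lt_of_le_of_lt ?_ (half_lt_self hε)
  rw [abs_sub_le_iff, sub_le_iff_le_add, sub_le_comm, div_le_iff₀ htv, le_div_iff₀ htv]
  constructor <;> linarith

end IsStationarySubadditive

/-! ### The localized minimal energy -/

lemma norm_toRd_le_irange {E0 : Finset (Zd d)} {b : Zd d} (hb : b ∈ E0) :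
    ‖toRd b‖ ≤ irange d E0 :=
  (le_csSup (E0.finite_toSet.image fun b : Zd d => ‖toRd b‖).bddAbove ⟨b, hb, rfl⟩).trans
    (le_max_right _ _)

lemma irange_nonneg (d : ℕ) (E0 : Finset (Zd d)) : 0 ≤ irange d E0 :=
  (by positivity : (0 : ℝ) ≤ 4 * √d).trans (le_max_left _ _)

/-- The competitors `φ` in the minimization defining `m_F(ω; A)`: lattice functions vanishing
within the interaction range of the complement of `A`. -/
def IsAdmissible (E0 : Finset (Zd d)) (A : Set (Rd d)) (φ : Zd d → Rn n) : Prop :=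
  ∀ z, infDist (toRd z) Aᶜ ≤ irange d E0 → φ z = 0

namespace IsAdmissible

variable {E0 : Finset (Zd d)} {A B : Set (Rd d)} {φ ψ : Zd d → Rn n}

lemma add (hφ : IsAdmissible E0 A φ) (hψ : IsAdmissible E0 A ψ) : IsAdmissible E0 A (φ + ψ) :=
  fun z hz => by rw [Pi.add_apply, hφ z hz, hψ z hz, add_zero]

-- The infimum distance to the empty set is `0`, so `B` must not be the whole space.
lemma mono [NeZero d] (hφ : IsAdmissible E0 A φ) (hAB : A ⊆ B) (hB : Bornology.IsBounded B) :
    IsAdmissible E0 B φ :=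
  fun z hz => hφ z <| (infDist_le_infDist_of_subset (Set.compl_subset_compl.2 hAB)
    (Set.nonempty_compl.2 fun h => NormedSpace.unbounded_univ ℝ (Rd d) (h ▸ hB))).trans hz

lemma apply_eq_zero (hφ : IsAdmissible E0 A φ) {z : Zd d} (hz : toRd z ∉ A) : φ z = 0 :=
  hφ z <| (infDist_zero_of_mem hz).trans_le (irange_nonneg d E0)

lemma apply_add_eq_zero (hφ : IsAdmissible E0 A φ) {z b : Zd d} (hz : toRd z ∉ A) (hb : b ∈ E0) :
    φ (z + b) = 0 := by
  refine hφ _ ((infDist_le_dist_of_mem hz).trans ?_)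
  rw [dist_eq_norm, toRd_add, add_sub_cancel_left]
  exact norm_toRd_le_irange hb

lemma comp_sub (hφ : IsAdmissible E0 A φ) (z : Zd d) :
    IsAdmissible E0 (toRd z +ᵥ A) fun w => φ (w - z) := by
  intro w hw
  have hw' : toRd w = toRd z +ᵥ toRd (w - z) := by
    rw [vadd_eq_add, ← toRd_add, add_sub_cancel]
  rw [← Set.vadd_set_compl, hw', ← Set.image_vadd, infDist_image (isometry_vadd _ _)] at hw
  exact hφ _ hw

end IsAdmissible

instance (E0 : Finset (Zd d)) (A : Set (Rd d)) :
    Nonempty {φ : Zd d → Rn n // ∀ z, infDist (toRd z) Aᶜ ≤ irange d E0 → φ z = 0} :=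
  ⟨0, fun _ _ => rfl⟩

/-- The energy at a lattice site of the perturbation `g_F + φ` of the affine function `g_F`; the
environment `ω` is the one seen from that site. -/
def siteEnergy {X : Type*} (E0 : Finset (Zd d)) (V : Zd d → X → Rn n → ℝ) (F : Rd d →L[ℝ] Rn n)
    (φ : Zd d → Rn n) (z : Zd d) (ω : X) : ℝ :=
  ∑ b ∈ E0, V b ω (‖toRd b‖⁻¹ • (F (toRd b) + (φ (z + b) - φ z)))

/-- The energy of the affine function `g_F` at the origin. -/
def affineEnergy {X : Type*} (E0 : Finset (Zd d)) (V : Zd d → X → Rn n → ℝ) (F : Rd d →L[ℝ] Rn n)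
    (ω : X) : ℝ :=
  ∑ b ∈ E0, V b ω (‖toRd b‖⁻¹ • F (toRd b))

section Energy

variable {X : Type*} {τ : Zd d → X → X} {E0 : Finset (Zd d)} {V : Zd d → X → Rn n → ℝ}
  {F : Rd d →L[ℝ] Rn n} {A B : Set (Rd d)} {φ ψ : Zd d → Rn n}

lemma siteEnergy_add_of_notMem (hψ : IsAdmissible E0 A ψ) {z : Zd d} (hz : toRd z ∉ A) (ω : X) :
    siteEnergy E0 V F (φ + ψ) z ω = siteEnergy E0 V F φ z ω := by
  refine Finset.sum_congr rfl fun b hb => ?_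
  simp only [Pi.add_apply, hψ.apply_eq_zero hz, hψ.apply_add_eq_zero hz hb, add_zero]

lemma siteEnergy_of_notMem (hφ : IsAdmissible E0 A φ) {z : Zd d} (hz : toRd z ∉ A) (ω : X) :
    siteEnergy E0 V F φ z ω = affineEnergy E0 V F ω := by
  refine Finset.sum_congr rfl fun b hb => ?_
  rw [hφ.apply_eq_zero hz, hφ.apply_add_eq_zero hz hb, sub_zero, add_zero]

lemma energy1_eq_tsum (ω : X) (φ : Zd d → Rn n) (A : Set (Rd d)) :
    energy1 τ E0 V ω (fun z => F (toRd z) + φ z) A =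
      ∑' z, if toRd z ∈ A then siteEnergy E0 V F φ z (τ z ω) else 0 := by
  simp only [energy1, siteEnergy, toRd_add, map_add, add_sub_add_comm, add_sub_cancel_left]

lemma energy1_eq_sum {L : Finset (Zd d)} (hL : ∀ z, z ∈ L ↔ toRd z ∈ A) (ω : X)
    (φ : Zd d → Rn n) :
    energy1 τ E0 V ω (fun z => F (toRd z) + φ z) A =
      ∑ z ∈ L, siteEnergy E0 V F φ z (τ z ω) := by
  rw [energy1_eq_tsum, tsum_eq_sum fun z hz => if_neg fun hzA => hz ((hL z).2 hzA)]
  exact Finset.sum_congr rfl fun z hz => if_pos ((hL z).1 hz)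

lemma exists_finset_mem_iff_toRd_mem (hA : Bornology.IsBounded A) :
    ∃ L : Finset (Zd d), ∀ z, z ∈ L ↔ toRd z ∈ A :=
  ⟨(finite_setOf_toRd_mem hA).toFinset, fun _ => by simp⟩

lemma energy1_union (hA : Bornology.IsBounded A) (hB : Bornology.IsBounded B)
    (hAB : Disjoint A B) (hφ : IsAdmissible E0 A φ) (hψ : IsAdmissible E0 B ψ) (ω : X) :
    energy1 τ E0 V ω (fun z => F (toRd z) + (φ + ψ) z) (A ∪ B) =
      energy1 τ E0 V ω (fun z => F (toRd z) + φ z) A +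
        energy1 τ E0 V ω (fun z => F (toRd z) + ψ z) B := by
  obtain ⟨L, hL⟩ := exists_finset_mem_iff_toRd_mem hA
  obtain ⟨L', hL'⟩ := exists_finset_mem_iff_toRd_mem hB
  have hLL' : Disjoint L L' := Finset.disjoint_left.2 fun z hz hz' =>
    Set.disjoint_left.1 hAB ((hL z).1 hz) ((hL' z).1 hz')
  rw [energy1_eq_sum (L := L ∪ L') (by simp only [Finset.mem_union, hL, hL', Set.mem_union,
    implies_true]), energy1_eq_sum hL, energy1_eq_sum hL', Finset.sum_union hLL']
  congr 1 <;> refine Finset.sum_congr rfl fun z hz => ?_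
  · exact siteEnergy_add_of_notMem hψ (Set.disjoint_left.1 hAB ((hL z).1 hz)) _
  · rw [add_comm]
    exact siteEnergy_add_of_notMem hφ (Set.disjoint_right.1 hAB ((hL' z).1 hz)) _

lemma energy1_vadd (hτ : ∀ x y ω, τ (x + y) ω = τ x (τ y ω)) (ω : X) (z : Zd d) (A : Set (Rd d))
    (φ : Zd d → Rn n) :
    energy1 τ E0 V ω (fun w => F (toRd w) + φ (w - z)) (toRd z +ᵥ A) =
      energy1 τ E0 V (τ z ω) (fun w => F (toRd w) + φ w) A := by
  rw [energy1_eq_tsum, energy1_eq_tsum, ← (Equiv.addRight z).tsum_eq]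
  refine tsum_congr fun w => ?_
  have hmem : toRd (w + z) ∈ toRd z +ᵥ A ↔ toRd w ∈ A := by
    rw [toRd_add, add_comm, ← vadd_eq_add, Set.vadd_mem_vadd_set_iff]
  simp only [Equiv.coe_addRight, siteEnergy, add_right_comm w z, add_sub_cancel_right, hτ, hmem]

lemma mF_empty (ω : X) : mF τ E0 V ω F ∅ = 0 := by
  simp only [mF, energy1, Set.mem_empty_iff_false, if_false, tsum_zero]
  exact ciInf_const

lemma affineEnergy_nonneg (hV : ∀ b ∈ E0, ∀ (ω : X) (r : Rn n), 0 ≤ V b ω r) (ω : X) :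
    0 ≤ affineEnergy E0 V F ω :=
  Finset.sum_nonneg fun b hb => hV b hb _ _

lemma energy1_nonneg (hV : ∀ b ∈ E0, ∀ (ω : X) (r : Rn n), 0 ≤ V b ω r) (ω : X)
    (u : Zd d → Rn n) (A : Set (Rd d)) : 0 ≤ energy1 τ E0 V ω u A := by
  refine tsum_nonneg fun z => ?_
  split_ifs
  · exact Finset.sum_nonneg fun b hb => hV b hb _ _
  · exact le_rfl

lemma mF_nonneg (hV : ∀ b ∈ E0, ∀ (ω : X) (r : Rn n), 0 ≤ V b ω r) (ω : X) (A : Set (Rd d)) :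
    0 ≤ mF τ E0 V ω F A :=
  Real.iInf_nonneg fun _ => energy1_nonneg hV _ _ _

lemma mF_le_energy1 (hV : ∀ b ∈ E0, ∀ (ω : X) (r : Rn n), 0 ≤ V b ω r)
    (hφ : IsAdmissible E0 A φ) (ω : X) :
    mF τ E0 V ω F A ≤ energy1 τ E0 V ω (fun z => F (toRd z) + φ z) A :=
  ciInf_le (ι := {φ : Zd d → Rn n // IsAdmissible E0 A φ})
    ⟨0, by rintro _ ⟨φ, rfl⟩; exact energy1_nonneg hV _ _ _⟩ ⟨φ, hφ⟩

lemma mF_union_le [NeZero d] (hV : ∀ b ∈ E0, ∀ (ω : X) (r : Rn n), 0 ≤ V b ω r)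
    (hA : Bornology.IsBounded A) (hB : Bornology.IsBounded B)
    (hAB : Disjoint A B) (ω : X) :
    mF τ E0 V ω F (A ∪ B) ≤ mF τ E0 V ω F A + mF τ E0 V ω F B :=
  le_ciInf_add_ciInf fun φ ψ => (mF_le_energy1 hV
    ((IsAdmissible.mono φ.2 Set.subset_union_left (hA.union hB)).add
      (IsAdmissible.mono ψ.2 Set.subset_union_right (hA.union hB))) ω).trans_eq
    (energy1_union hA hB hAB φ.2 ψ.2 ω)

lemma mF_le_add_sum [NeZero d] (hV : ∀ b ∈ E0, ∀ (ω : X) (r : Rn n), 0 ≤ V b ω r)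
    (hB : Bornology.IsBounded B) (hAB : A ⊆ B) {U : Finset (Zd d)}
    (hU : ∀ z, toRd z ∈ B \ A → z ∈ U) (ω : X) :
    mF τ E0 V ω F B ≤ mF τ E0 V ω F A + ∑ z ∈ U, affineEnergy E0 V F (τ z ω) := by
  rw [← sub_le_iff_le_add]
  refine le_ciInf fun ⟨φ, (hφ : IsAdmissible E0 A φ)⟩ => ?_
  rw [sub_le_iff_le_add]
  refine (mF_le_energy1 hV (hφ.mono hAB hB) ω).trans ?_
  obtain ⟨L, hL⟩ := exists_finset_mem_iff_toRd_mem (hB.subset hAB)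
  obtain ⟨L', hL'⟩ := exists_finset_mem_iff_toRd_mem hB
  have hLL' : L ⊆ L' := fun z hz => (hL' z).2 (hAB ((hL z).1 hz))
  have hmem (z : Zd d) (hz : z ∈ L' \ L) : toRd z ∈ B \ A := by
    rwa [Finset.mem_sdiff, hL, hL'] at hz
  rw [energy1_eq_sum hL, energy1_eq_sum hL', ← Finset.sum_sdiff hLL', add_comm]
  gcongr 1
  calc ∑ z ∈ L' \ L, siteEnergy E0 V F φ z (τ z ω)
      = ∑ z ∈ L' \ L, affineEnergy E0 V F (τ z ω) :=
        Finset.sum_congr rfl fun z hz => siteEnergy_of_notMem hφ (hmem z hz).2 _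
    _ ≤ ∑ z ∈ U, affineEnergy E0 V F (τ z ω) :=
        Finset.sum_le_sum_of_subset_of_nonneg (fun z hz => hU z (hmem z hz))
          fun z _ _ => affineEnergy_nonneg hV _

lemma mF_vadd_le (hV : ∀ b ∈ E0, ∀ (ω : X) (r : Rn n), 0 ≤ V b ω r)
    (hτ : ∀ x y ω, τ (x + y) ω = τ x (τ y ω)) (ω : X) (z : Zd d) (A : Set (Rd d)) :
    mF τ E0 V ω F (toRd z +ᵥ A) ≤ mF τ E0 V (τ z ω) F A :=
  le_ciInf fun φ => (mF_le_energy1 hV (IsAdmissible.comp_sub φ.2 z) ω).trans_eq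
    (energy1_vadd hτ ω z A φ.1)

end Energy

variable {τ : Zd d → Ω → Ω} {E0 : Finset (Zd d)} {V : Zd d → Ω → Rn n → ℝ}
  {F : Rd d →L[ℝ] Rn n}

-- By continuity the infimum may be taken over a countable dense set of competitors.
lemma measurable_mF (hVmeas : ∀ b ∈ E0, ∀ r, Measurable fun ω => V b ω r)
    (hVcont : ∀ b ∈ E0, ∀ ω, Continuous (V b ω)) (hV : ∀ b ∈ E0, ∀ ω r, 0 ≤ V b ω r)
    (hτ : ∀ z, Measurable (τ z)) {A : Set (Rd d)} (hA : Bornology.IsBounded A) :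
    Measurable fun ω => mF τ E0 V ω F A := by
  obtain ⟨L, hL⟩ := exists_finset_mem_iff_toRd_mem hA
  set K := {φ : Zd d → Rn n // IsAdmissible E0 A φ}
  have : Nonempty K := ⟨0, fun _ _ => rfl⟩
  have : SecondCountableTopology K := TopologicalSpace.Subtype.secondCountableTopology _
  set e : Ω → K → ℝ := fun ω φ => energy1 τ E0 V ω (fun z => F (toRd z) + φ.1 z) A
  have he (ω : Ω) (φ : K) : e ω φ = ∑ z ∈ L, siteEnergy E0 V F φ.1 z (τ z ω) :=
    energy1_eq_sum hL ω φ.1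
  have hcont (ω : Ω) : Continuous (e ω) := by
    simp only [funext (he ω), siteEnergy]
    have heval (z : Zd d) : Continuous fun φ : K => φ.1 z :=
      (continuous_apply z).comp continuous_subtype_val
    exact continuous_finsetSum _ fun z _ => continuous_finsetSum _ fun b hb => (hVcont b hb _).comp
      ((continuous_const.add ((heval (z + b)).sub (heval z))).const_smul ‖toRd b‖⁻¹)
  have hdense (ω : Ω) : mF τ E0 V ω F A = ⨅ j, e ω (TopologicalSpace.denseSeq K j) := by
    have hbdd : BddBelow (range (e ω)) := ⟨0, by rintro _ ⟨φ, rfl⟩; exact energy1_nonneg hV _ _ _⟩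
    exact ((TopologicalSpace.denseRange_denseSeq K).ciInf (hcont ω) hbdd).symm.trans
      (iInf_range' _ _)
  simp only [hdense, he, siteEnergy]
  exact Measurable.iInf fun j => Finset.measurable_fun_sum _ fun z _ =>
    Finset.measurable_fun_sum _ fun b hb => (hVmeas b hb _).comp (hτ z)

lemma isStationarySubadditive_mF [NeZero d] {P : Measure Ω} (hτ : IsMeasurePreservingAction P τ)
    (hVmeas : ∀ b ∈ E0, ∀ r, Measurable fun ω => V b ω r)
    (hVcont : ∀ b ∈ E0, ∀ ω, Continuous (V b ω)) (hV : ∀ b ∈ E0, ∀ ω r, 0 ≤ V b ω r)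
    (hVint : ∀ b ∈ E0, Integrable (fun ω => V b ω (‖toRd b‖⁻¹ • F (toRd b))) P) :
    IsStationarySubadditive P τ (fun ω A => mF τ E0 V ω F A) (affineEnergy E0 V F) where
  nonneg := mF_nonneg hV
  empty := mF_empty
  union_le ω _ _ hA hB hAB := mF_union_le hV hA hB hAB ω
  le_add_sum ω _ _ _ hB hAB hU := mF_le_add_sum hV hB hAB hU ω
  vadd_le := mF_vadd_le hV hτ.add_apply
  aestronglyMeasurable _ hA :=
    (measurable_mF hVmeas hVcont hV hτ.measurable hA).aestronglyMeasurable
  cost_nonneg := affineEnergy_nonneg hV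
  integrable_cost := integrable_finsetSum _ hVint

lemma integrable_of_lintegral_rpow_lt_top {P : Measure Ω} [IsFiniteMeasure P] {f : Ω → ℝ}
    {α : ℝ} (hf : AEStronglyMeasurable f P) (hf0 : ∀ ω, 0 ≤ f ω) (hα : 1 ≤ α)
    (hmom : ∫⁻ ω, ENNReal.ofReal (f ω ^ α) ∂P < ⊤) : Integrable f P := by
  have hα0 : 0 < α := one_pos.trans_le hα
  refine MemLp.integrable (q := ENNReal.ofReal α) (ENNReal.one_le_ofReal.2 hα) ⟨hf, ?_⟩
  rw [eLpNorm_lt_top_iff_lintegral_rpow_enorm_lt_top (ENNReal.ofReal_pos.2 hα0).ne'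
    ENNReal.ofReal_ne_top, ENNReal.toReal_ofReal hα0.le]
  simpa only [Real.enorm_of_nonneg (hf0 _), ENNReal.ofReal_rpow_of_nonneg (hf0 _) hα0.le]
    using hmom

lemma integrable_of_le_mul_one_add {P : Measure Ω} [IsFiniteMeasure P] {f g : Ω → ℝ} {c s : ℝ}
    (hf : AEStronglyMeasurable f P) (hf0 : ∀ ω, 0 ≤ f ω) (hg : Integrable g P)
    (hle : ∀ ω, f ω ≤ c * (1 + g ω * s)) : Integrable f P :=
  (((integrable_const (1 : ℝ)).add (hg.mul_const s)).const_mul c).mono' hf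
    (ae_of_all _ fun ω => by rw [Real.norm_of_nonneg (hf0 ω)]; exact hle ω)

theorem ergodic_limit_mF_general [NeZero d] (P : Measure Ω) [IsProbabilityMeasure P]
    (τ : Zd d → Ω → Ω) (hτ : IsErgodicAction P τ) (E0 : Finset (Zd d)) (_hE00 : (0 : Zd d) ∉ E0)
    (V : Zd d → Ω → Rn n → ℝ) (hVmeas : ∀ b ∈ E0, ∀ r, Measurable fun ω => V b ω r)
    (hVcont : ∀ b ∈ E0, ∀ ω, Continuous (V b ω)) (hVnn : ∀ b ∈ E0, ∀ ω r, 0 ≤ V b ω r)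
    (F : Rd d →L[ℝ] Rn n)
    (hVint : ∀ b ∈ E0, Integrable (fun ω => V b ω (‖toRd b‖⁻¹ • F (toRd b))) P) :
    ∃ ΩF : Set Ω, MeasurableSet ΩF ∧ P ΩF = 1 ∧
      (∀ ω ∈ ΩF, ∀ a b : Fin d → ℝ, (∀ i, a i < b i) →
        Tendsto (fun t : ℝ =>
            mF τ E0 V ω F (t • closedBox a b) / (volume (t • closedBox a b)).toReal)
          atTop (𝓝 (W0 P τ E0 V F))) ∧
      Tendsto (fun k : ℕ => ((k : ℝ) ^ d)⁻¹ * ∫ ω, mF τ E0 V ω F (cube d k) ∂P)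
        atTop (𝓝 (W0 P τ E0 V F)) ∧
      W0 P τ E0 V F =
        ⨅ k : {k : ℕ // 0 < k}, (((k : ℕ) : ℝ) ^ d)⁻¹ * ∫ ω, mF τ E0 V ω F (cube d k) ∂P := by
  have H := isStationarySubadditive_mF hτ.toIsMeasurePreservingAction hVmeas hVcont hVnn hVint
  obtain ⟨N, hN, hNmeas, hN0⟩ :=
    exists_measurable_superset_of_null (ae_iff.1 (H.ae_tendsto_smul_closedBox hτ))
  exact ⟨Nᶜ, hNmeas.compl, (prob_compl_eq_one_iff hNmeas).2 hN0,
    fun ω hω => not_not.1 fun hlim => hω (hN hlim),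
    H.tendsto_meanDensity hτ, rfl⟩

/-- subadditive ergodic limit, Lemma 3.2 of the paper. -/
theorem ergodic_limit_mF
    {d n : ℕ} (hd : 2 ≤ d) (hn : 1 ≤ n)
    {Ω : Type*} [MeasurableSpace Ω] (P : Measure Ω) [IsProbabilityMeasure P]
    (τ : Zd d → Ω → Ω) (hτ0 : τ 0 = id)
    (hτadd : ∀ x y : Zd d, τ (x + y) = τ x ∘ τ y)
    (hτmp : ∀ z : Zd d, MeasurePreserving (τ z) P P)
    (hτerg : ∀ B : Set Ω, MeasurableSet B → (∀ z : Zd d, τ z ⁻¹' B = B) → P B = 0 ∨ P B = 1)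
    (E0 : Finset (Zd d)) (hE00 : (0 : Zd d) ∉ E0) (hE0b : ∀ i : Fin d, stdb i ∈ E0)
    (p c₁ : ℝ) (hp : 1 < p) (hc₁ : 0 < c₁)
    (V : Zd d → Ω → Rn n → ℝ)
    (hVmeas : ∀ b ∈ E0, Measurable fun q : Ω × Rn n => V b q.1 q.2)
    (hVcont : ∀ b ∈ E0, ∀ ω : Ω, Continuous (V b ω))
    (hVnn : ∀ b ∈ E0, ∀ (ω : Ω) (r : Rn n), 0 ≤ V b ω r)
    (lam : Zd d → Ω → ℝ)
    (hlammeas : ∀ b ∈ E0, Measurable (lam b))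
    (hlamnn : ∀ b ∈ E0, ∀ ω : Ω, 0 ≤ lam b ω)
    (hgrowth : ∀ b ∈ E0, ∀ (ω : Ω) (r : Rn n),
      lam b ω * (‖r‖ ^ p / c₁ - c₁) ≤ V b ω r ∧ V b ω r ≤ c₁ * (1 + lam b ω * (‖r‖ ^ p + 1)))
    (α β : ℝ) (hα : 1 ≤ α) (hβ : 1 / (p - 1) ≤ β)
    (hmomα : ∀ b ∈ E0, ∫⁻ ω, ENNReal.ofReal (lam b ω ^ α) ∂P < ⊤)
    (hmomβ : ∀ i : Fin d, ∫⁻ ω, ENNReal.ofReal (lam (stdb i) ω) ^ (-β) ∂P < ⊤)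
    (F : Rd d →L[ℝ] Rn n) :
    ∃ ΩF : Set Ω, MeasurableSet ΩF ∧ P ΩF = 1 ∧
      (∀ ω ∈ ΩF, ∀ a b : Fin d → ℝ, (∀ i, a i < b i) →
        Tendsto (fun t : ℝ =>
            mF τ E0 V ω F (t • closedBox a b) / (volume (t • closedBox a b)).toReal)
          atTop (𝓝 (W0 P τ E0 V F))) ∧
      Tendsto (fun k : ℕ => ((k : ℝ) ^ d)⁻¹ * ∫ ω, mF τ E0 V ω F (cube d k) ∂P)
        atTop (𝓝 (W0 P τ E0 V F)) ∧
      W0 P τ E0 V F =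
        ⨅ k : {k : ℕ // 0 < k}, (((k : ℕ) : ℝ) ^ d)⁻¹ * ∫ ω, mF τ E0 V ω F (cube d k) ∂P := by
  have : NeZero d := ⟨by omega⟩
  have hVmeas' (b : Zd d) (hb : b ∈ E0) (r : Rn n) : Measurable fun ω => V b ω r :=
    (hVmeas b hb).comp (measurable_id.prodMk measurable_const)
  have hlamint (b : Zd d) (hb : b ∈ E0) : Integrable (lam b) P :=
    integrable_of_lintegral_rpow_lt_top (hlammeas b hb).aestronglyMeasurable (hlamnn b hb) hα
      (hmomα b hb)
  exact ergodic_limit_mF_general P τ ⟨⟨hτ0, hτadd, hτmp⟩, hτerg⟩ E0 hE00 V hVmeas' hVcont hVnn F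
    fun b hb => integrable_of_le_mul_one_add (hVmeas' b hb _).aestronglyMeasurable
      (fun ω => hVnn b hb ω _) (hlamint b hb) fun ω => (hgrowth b hb ω _).2

end StochHom
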